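/- arXiv:1102.2883 — 2 statements merged into one kernel-verified Lean document; each statement's English description precedes it below -/
import Mathlib

section
/- Let R ∈ ℤ_{>0}^m, C ∈ ℤ_{>0}^n, and K ∈ ℤ_{>0}^{m×n}, and assume T_K(R,C) > 0. Then lim_{s→∞} (1/s²) ln T_{K^{(s)}}(R^{(s)},C^{(s)}) = ln ( inf_{x_1,…,x_m,y_1,…,y_n > 0} G(x,y) / (x^R y^C) ), where G(x,y) := ∏_{i=1}^m ∏_{j=1}^n [1 + x_i y_j + (x_i y_j)² + ⋯ + (x_i y_j)^{k_{ij}}] and x^R y^C := ∏_i x_i^{r_i} ∏_j y_j^{c_j}. -/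
open Real Filter Finset

noncomputable section

/-- `ω(n) = n^n / n!`. -/
def omegaFn (n : ℕ) : ℝ := (n : ℝ) ^ n / (n.factorial : ℝ)

/-- `Ω(V)`: the sum of `ω(v)` over the entries of a vector `V`. -/
def OmegaVec {I : Type*} [Fintype I] (V : I → ℕ) : ℝ := ∑ i, omegaFn (V i)

/-- `Ω(K)`: the sum of `ω(k)` over the entries of a matrix `K`. -/
def OmegaMat {I J : Type*} [Fintype I] [Fintype J] (K : I → J → ℕ) : ℝ :=
  ∑ i, ∑ j, omegaFn (K i j)

/-- `T_K(R,C)`: the number of nonnegative-integer matrices with row sums `R`,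
column sums `C`, and entries bounded by `K` (a bound of `⊤` means unbounded). -/
def tableCount {I J : Type*} [Fintype I] [Fintype J]
    (K : I → J → ℕ∞) (R : I → ℕ) (C : J → ℕ) : ℕ :=
  Set.ncard {A : I → J → ℕ |
    (∀ i, ∑ j, A i j = R i) ∧ (∀ j, ∑ i, A i j = C j) ∧ ∀ i j, (A i j : ℕ∞) ≤ K i j}

/-- The `s`-fold cloning of a margin vector. -/
def cloneVec {m : ℕ} (s : ℕ) (R : Fin m → ℕ) : Fin s × Fin m → ℕ :=
  fun p => s * R p.2

/-- The `s`-fold cloning of a bound matrix. -/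
def cloneMat {m n : ℕ} (s : ℕ) (K : Fin m → Fin n → ℕ∞) :
    Fin s × Fin m → Fin s × Fin n → ℕ∞ :=
  fun p q => K p.2 q.2

/-- The mean of the truncated geometric distribution on `{0,…,κ}` with ratio `q`. -/
def tgMean (κ : ℕ∞) (q : ℝ) : ℝ :=
  if κ = ⊤ then q / (1 - q)
  else (∑ t ∈ Finset.range (κ.toNat + 1), (t : ℝ) * q ^ t) /
    (∑ t ∈ Finset.range (κ.toNat + 1), q ^ t)

/-- The parameter `q(x;κ)` of the truncated geometric distribution `TG(x;κ)` with mean `x`. -/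
def tgQ (κ : ℕ∞) (x : ℝ) : ℝ := sInf {q : ℝ | 0 ≤ q ∧ x ≤ tgMean κ q}

/-- The parameter `p(x;κ)` of the truncated geometric distribution `TG(x;κ)` with mean `x`. -/
def tgP (κ : ℕ∞) (x : ℝ) : ℝ :=
  if κ = ⊤ then 1 - tgQ κ x
  else (∑ t ∈ Finset.range (κ.toNat + 1), tgQ κ x ^ t)⁻¹

/-- The probability mass function of `TG(x;κ)`: `Pr[X=t] = p q^t` for `t ∈ {0,…,κ}`. -/
def tgPMF (κ : ℕ∞) (x : ℝ) (t : ℕ) : ℝ :=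
  if (t : ℕ∞) ≤ κ then tgP κ x * tgQ κ x ^ t else 0

/-- `H^max_κ(x)`: the (base-e) entropy of the truncated geometric distribution `TG(x;κ)`. -/
def Hmax (κ : ℕ∞) (x : ℝ) : ℝ := -∑' t : ℕ, tgPMF κ x t * Real.log (tgPMF κ x t)

/-- The `(κ+1)`-nomial coefficient `(n choose r)_κ`: the coefficient of `x^r` in
`(1+x+⋯+x^κ)^n`; for `κ = ∞` it is `(r+n-1).choose r`. -/
def knomial (κ : ℕ∞) (n r : ℕ) : ℕ :=
  if κ = ⊤ then (r + n - 1).choose r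
  else ((∑ t ∈ Finset.range (κ.toNat + 1), (Polynomial.X : Polynomial ℕ) ^ t) ^ n).coeff r

/-- The independence-heuristic estimate `I_κ(R,C)`. -/
def indepEst (κ : ℕ∞) {I J : Type*} [Fintype I] [Fintype J] (R : I → ℕ) (C : J → ℕ) : ℝ :=
  ((knomial κ (Fintype.card I * Fintype.card J) (∑ i, R i) : ℝ))⁻¹ *
    (∏ i, (knomial κ (Fintype.card J) (R i) : ℝ)) *
    ∏ j, (knomial κ (Fintype.card I) (C j) : ℝ)

/-- The transportation polytope `Π_κ(R,C)` of real matrices with entries in `[0,κ]`,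
row sums `R` and column sums `C`. -/
def transportPolytope (κ : ℕ∞) {m n : ℕ} (R : Fin m → ℕ) (C : Fin n → ℕ) :
    Set (Fin m → Fin n → ℝ) :=
  {Z | (∀ i j, 0 ≤ Z i j) ∧ (∀ i j, κ ≠ ⊤ → Z i j ≤ (κ.toNat : ℝ)) ∧
    (∀ i, ∑ j, Z i j = (R i : ℝ)) ∧ ∀ j, ∑ i, Z i j = (C j : ℝ)}

/-- The generating function `G(x,y) = ∏_{i,j} (1 + x_i y_j + ⋯ + (x_i y_j)^{k_{ij}})`. -/
def genFun {m n : ℕ} (K : Fin m → Fin n → ℕ) (x : Fin m → ℝ) (y : Fin n → ℝ) : ℝ :=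
  ∏ i, ∏ j, ∑ t ∈ Finset.range (K i j + 1), (x i * y j) ^ t

/-- The monomial `x^R = ∏_i x_i^{r_i}`. -/
def monom {m : ℕ} (x : Fin m → ℝ) (R : Fin m → ℕ) : ℝ := ∏ i, x i ^ R i

/-- The concave roof function `f_K(R,C)`: the supremum of `∑_t α_t ln T_K(R^t,C^t)` over
convex combinations of integer margins averaging to `(R,C)` (and `⊥ = -∞` if none exist). -/
def fK {m n : ℕ} (K : Fin m → Fin n → ℕ) (R : Fin m → ℝ) (C : Fin n → ℝ) : EReal :=
  sSup {v : EReal | ∃ (p : ℕ) (α : Fin p → ℝ)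
    (Rs : Fin p → Fin m → ℕ) (Cs : Fin p → Fin n → ℕ),
    1 ≤ p ∧ (∀ t, 0 ≤ α t) ∧ ∑ t, α t = 1 ∧
    (∀ i, ∑ t, α t * (Rs t i : ℝ) = R i) ∧ (∀ j, ∑ t, α t * (Cs t j : ℝ) = C j) ∧
    (∀ t, 0 < tableCount (fun i j => (K i j : ℕ∞)) (Rs t) (Cs t)) ∧
    v = ((∑ t, α t * Real.log (tableCount (fun i j => (K i j : ℕ∞)) (Rs t) (Cs t)) : ℝ) : EReal)}

/-- `e^x` for an extended real `x`, with `e^{-∞} = 0`. -/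
def expE (e : EReal) : ℝ := if e = ⊥ then 0 else Real.exp e.toReal

end

/-!
Cut a cloned table into an `s × s` array of blocks, each a letter from the finite alphabet of
bounded `m × n` tables, weighted by its row and column excess over `R` and `C`; the table has the
cloned margins exactly when the row and column sums of these weights vanish. Writing `x = exp α`
and `y = exp β`, the quotient `G(x,y) / (x^R y^C)` is the partition function
`Z φ = ∑ₐ exp (φ a)` at the character `φ` with coefficients `(α, β)`, so any balanced array
contributes `1` to `Z φ ^ s²`, which gives the upper bound.

For the lower bound, let `L < log inf Z`. By the pigeonhole principle every `φ` admits a weight `e`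
attained by at least `exp (N L - φ e)` words of length `N`. Convex duality turns this into
nonnegative weights, made integral by Diophantine approximation, under which the total of the `e`s
vanishes, and concatenation yields `exp (M L)` words of length `M` with weight sum zero. Read those
of length `N²` as `N × N` arrays. Fixing the row and column sums, which now add up to zero but need
not vanish, costs only a factor `exp (O (N log N))`. Finally, tile a larger array with cyclic
translates of such arrays: every line then meets each row (or column) sum equally often, so it
balances, while the tiles are chosen independently.
-/

section IntegralDuality

theorem exists_forall_abs_mul_sub_round_lt {κ : Type*} [Finite κ] (w : κ → ℝ) {ε : ℝ}
    (hε : 0 < ε) : ∃ N : ℕ, 0 < N ∧ ∀ k, |N * w k - round (N * w k)| < ε := by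
  have hrec : MapClusterPt 0 atTop fun N : ℕ => N • fun k => (w k : UnitAddCircle) :=
    mapClusterPt_zero_atTop_nsmul _
  have hnear : ∀ᶠ ξ : κ → UnitAddCircle in nhds 0, ∀ k, ‖ξ k‖ < ε :=
    eventually_all.mpr fun k =>
      (continuous_apply k).norm.continuousAt.eventually_lt continuousAt_const (by simpa using hε)
  obtain ⟨N, hN, hpos⟩ := ((hrec.frequently hnear).and_eventually (eventually_gt_atTop 0)).exists
  refine ⟨N, hpos, fun k => ?_⟩
  rw [← UnitAddCircle.norm_eq, ← nsmul_eq_mul]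
  exact hN k

variable {κ : Type*} [Fintype κ]

theorem sum_round_mul_eq {w : κ → ℝ} {c : κ → ℤ} {b : ℤ} (hb : ∑ k, w k * c k = b) {N : ℕ}
    {ε : ℝ} (hN : ∀ k, |N * w k - round (N * w k)| < ε) (hε : ε * ∑ k, |(c k : ℝ)| < 1) :
    ∑ k, round (N * w k) * c k = N * b := by
  have herr : ((∑ k, round (N * w k) * c k - N * b : ℤ) : ℝ) =
      -∑ k, (N * w k - round (N * w k)) * c k := by
    push_cast
    simp only [sub_mul, Finset.sum_sub_distrib, mul_assoc, ← Finset.mul_sum, hb]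
    ring
  refine sub_eq_zero.mp (Int.abs_lt_one_iff.mp ?_)
  rw [← Int.cast_lt (R := ℝ), Int.cast_abs, herr, abs_neg, Int.cast_one]
  calc |∑ k, (N * w k - round (N * w k)) * c k|
      ≤ ∑ k, |(N * w k - round (N * w k)) * c k| := Finset.abs_sum_le_sum_abs _ _
    _ ≤ ∑ k, ε * |(c k : ℝ)| := by
        gcongr with k
        rw [abs_mul]
        gcongr
        exact (hN k).le
    _ < 1 := by rwa [← Finset.mul_sum]

/- An integer relation satisfied by real weights persists for their simultaneous Diophantine
approximations, because the defect is an integer of absolute value less than one. -/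
theorem exists_nat_weights_near {E : Type*} [AddCommGroup E] [Module.Free ℤ E] [Module.Finite ℤ E]
    (δ : κ → E) (e : E) {w : κ → ℝ} (hw : ∀ k, 0 ≤ w k)
    (hδ : ∀ φ : E →+ ℝ, ∑ k, w k * φ (δ k) = φ e) {ε : ℝ} (hε : 0 < ε) :
    ∃ (N : ℕ) (a : κ → ℕ), 0 < N ∧ ∑ k, a k • δ k = N • e ∧ ∀ k, |(a k : ℝ) - N * w k| < ε := by
  let b := Module.Free.chooseBasis ℤ E
  let B : ℝ := 1 + ∑ i, ∑ k, |(b.repr (δ k) i : ℝ)|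
  have hB : 0 < B := by positivity
  obtain ⟨N, hN₀, hN⟩ := exists_forall_abs_mul_sub_round_lt w (ε := min ε B⁻¹) (by positivity)
  have hround (k) : ((round (N * w k)).toNat : ℤ) = round (N * w k) := by
    refine Int.toNat_of_nonneg ?_
    rw [round_eq]
    exact Int.floor_nonneg.mpr (by have := hw k; positivity)
  refine ⟨N, fun k => (round (N * w k)).toNat, hN₀, b.ext_elem fun i => ?_, fun k => ?_⟩
  · have hcoord : ∑ k, w k * (b.repr (δ k) i : ℝ) = (b.repr e i : ℝ) :=
      hδ ((Int.castAddHom ℝ).comp (b.coord i).toAddMonoidHom)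
    have hsmall : min ε B⁻¹ * ∑ k, |(b.repr (δ k) i : ℝ)| < 1 := by
      have hle : ∑ k, |(b.repr (δ k) i : ℝ)| ≤ ∑ i, ∑ k, |(b.repr (δ k) i : ℝ)| :=
        Finset.single_le_sum (f := fun i => ∑ k, |(b.repr (δ k) i : ℝ)|)
          (fun _ _ => by positivity) (Finset.mem_univ i)
      calc min ε B⁻¹ * ∑ k, |(b.repr (δ k) i : ℝ)|
          ≤ B⁻¹ * ∑ k, |(b.repr (δ k) i : ℝ)| := by gcongr; exact min_le_right _ _
        _ < B⁻¹ * B := by gcongr; exact hle.trans_lt (lt_one_add _)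
        _ = 1 := inv_mul_cancel₀ hB.ne'
    have hsum := sum_round_mul_eq hcoord hN hsmall
    simp only [map_sum, map_nsmul, Finsupp.coe_finsetSum, Finset.sum_apply, Finsupp.smul_apply,
      nsmul_eq_mul, hround, hsum]
  · have hcast : ((round (N * w k)).toNat : ℝ) = round (N * w k) := mod_cast hround k
    rw [hcast, abs_sub_comm]
    exact (hN k).trans_le (min_le_left _ _)

theorem exists_mem_stdSimplex_forall_dotProduct_nonneg {S : Set (κ → ℝ)} (hS : Convex ℝ S)
    (hne : S.Nonempty) (h : ∀ f ∈ S, ∃ k, 0 ≤ f k) :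
    ∃ w ∈ stdSimplex ℝ κ, ∀ f ∈ S, 0 ≤ w ⬝ᵥ f := by
  classical
  have hdisj : Disjoint (Set.univ.pi fun _ : κ => Set.Iio (0 : ℝ)) S := by
    refine Set.disjoint_right.mpr fun f hf hlt => ?_
    obtain ⟨k, hk⟩ := h f hf
    exact (hlt k trivial).not_ge hk
  obtain ⟨F, u, hu, huS⟩ := geometric_hahn_banach_open
    (convex_pi fun _ _ => convex_Iio _) (isOpen_set_pi Set.finite_univ fun _ _ => isOpen_Iio)
    hS hdisj
  obtain ⟨v, hv⟩ := (dotProductEquiv ℝ κ).surjective F.toLinearMap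
  have hF (g) : F g = v ⬝ᵥ g := (LinearMap.congr_fun hv g).symm
  have hle (g : κ → ℝ) (hg : g ≤ 0) : v ⬝ᵥ g ≤ u := by
    rw [← hF]
    refine closure_minimal (fun g hg => (hu g hg).le)
      (isClosed_le F.continuous continuous_const) (?_ : g ∈ closure _)
    rw [closure_pi_set]
    exact fun k _ => closure_Iio (0 : ℝ) ▸ hg k
  have hu₀ : 0 ≤ u := by simpa using hle 0 le_rfl
  have hv₀ (k) : 0 ≤ v k := by
    by_contra! hk
    have ht : 0 ≤ (u + 1) / -v k := div_nonneg (by linarith) (by linarith)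
    have := hle (-Pi.single k ((u + 1) / -v k)) (neg_nonpos.mpr (Pi.single_nonneg.mpr ht))
    rw [dotProduct_neg, dotProduct_single, div_neg, mul_neg, neg_neg,
      mul_div_cancel₀ _ hk.ne] at this
    linarith
  have hvsum : 0 < ∑ k, v k := by
    obtain ⟨f, hf⟩ := hne
    refine (Finset.sum_nonneg fun k _ => hv₀ k).lt_of_ne' fun hzero => ?_
    have hv : v = 0 := (Fintype.sum_eq_zero_iff_of_nonneg hv₀).mp hzero
    have := (hu (fun _ => -1) fun _ _ => by simp).trans_le (huS f hf)
    simp [hF, hv] at this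
  refine ⟨(∑ k, v k)⁻¹ • v, ⟨fun k => mul_nonneg (by positivity) (hv₀ k), ?_⟩, fun f hf => ?_⟩
  · simp [← Finset.mul_sum, hvsum.ne']
  · rw [smul_dotProduct, ← hF]
    exact smul_nonneg (by positivity) (hu₀.trans (huS f hf))

theorem exists_mem_stdSimplex_dotProduct_eq_zero (W : Submodule ℝ (κ → ℝ)) (h : κ → ℝ)
    (hW : ∀ f ∈ W, ∃ k, 0 ≤ h k + f k) :
    ∃ w ∈ stdSimplex ℝ κ, (∀ f ∈ W, w ⬝ᵥ f = 0) ∧ 0 ≤ w ⬝ᵥ h := by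
  obtain ⟨w, hw, hpos⟩ := exists_mem_stdSimplex_forall_dotProduct_nonneg (W.convex.translate h)
    (W.nonempty.image _) (by rintro _ ⟨f, hf, rfl⟩; exact hW f hf)
  have hpos' (f) (hf : f ∈ W) (t : ℝ) : 0 ≤ w ⬝ᵥ h + t * (w ⬝ᵥ f) := by
    simpa [dotProduct_add, dotProduct_smul] using hpos _ ⟨t • f, W.smul_mem t hf, rfl⟩
  refine ⟨w, hw, fun f hf => ?_, by simpa using hpos' 0 W.zero_mem 0⟩
  by_contra hne
  have := hpos' f hf ((-1 - w ⬝ᵥ h) / (w ⬝ᵥ f))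
  rw [div_mul_cancel₀ _ hne] at this
  linarith

theorem exists_nat_weights_sum_smul_eq_zero {E : Type*} [AddCommGroup E] [Module.Free ℤ E]
    [Module.Finite ℤ E] (δ : κ → E) (h : κ → ℝ)
    (hδ : ∀ φ : E →+ ℝ, ∃ k, 0 ≤ h k + φ (δ k)) {ε : ℝ} (hε : 0 < ε) :
    ∃ a : κ → ℕ, 0 < ∑ k, a k ∧ ∑ k, a k • δ k = 0 ∧ -ε ≤ ∑ k, a k * h k := by
  let evalδ : (E →+ ℝ) →ₗ[ℝ] κ → ℝ :=
    { toFun φ k := φ (δ k), map_add' _ _ := rfl, map_smul' _ _ := rfl }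
  obtain ⟨w, hw, hwδ, hwh⟩ := exists_mem_stdSimplex_dotProduct_eq_zero (LinearMap.range evalδ) h
    (by rintro _ ⟨φ, rfl⟩; exact hδ φ)
  have hH : 0 < 1 + ∑ k, |h k| := by positivity
  have hone (φ : E × ℤ →+ ℝ) : ∑ k, w k * φ (δ k, 1) = φ (0, 1) := by
    have hsplit (z : E) : φ (z, 1) = φ.comp (AddMonoidHom.inl E ℤ) z + φ (0, 1) := by
      rw [AddMonoidHom.comp_apply, ← map_add]
      simp
    have hzero : ∑ k, w k * φ.comp (AddMonoidHom.inl E ℤ) (δ k) = 0 :=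
      hwδ _ ⟨φ.comp _, rfl⟩
    simp only [hsplit (δ _), mul_add, Finset.sum_add_distrib, hzero, ← Finset.sum_mul, hw.2,
      one_mul, zero_add]
  obtain ⟨N, a, hN, ha, hnear⟩ := exists_nat_weights_near _ _ hw.1 hone (div_pos hε hH)
  rw [Prod.ext_iff, Prod.fst_sum, Prod.snd_sum] at ha
  have hsum : ∑ k, a k = N := by exact_mod_cast (by simpa using ha.2 : ∑ k, (a k : ℤ) = N)
  refine ⟨a, by rwa [hsum], by simpa using ha.1, ?_⟩
  calc -ε ≤ -(ε / (1 + ∑ k, |h k|) * ∑ k, |h k|) := by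
        rw [neg_le_neg_iff, div_mul_eq_mul_div, div_le_iff₀ hH]
        linarith
    _ ≤ ∑ k, (a k - N * w k) * h k := by
        rw [Finset.mul_sum, ← Finset.sum_neg_distrib]
        gcongr with k
        refine neg_le_of_abs_le ?_
        rw [abs_mul]
        gcongr
        exact (hnear k).le
    _ ≤ ∑ k, (a k - N * w k) * h k + N * (w ⬝ᵥ h) := le_add_of_nonneg_right (by positivity)
    _ = ∑ k, a k * h k := by
        simp only [sub_mul, Finset.sum_sub_distrib, mul_assoc, ← Finset.mul_sum, dotProduct]
        ring

end IntegralDuality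

theorem exists_sum_le_card_range_mul_sum_filter {α β : Type*} [Fintype α] [Nonempty α]
    [DecidableEq β] (f : α → β) (w : α → ℝ) :
    ∃ a, ∑ x, w x ≤ Nat.card (Set.range f) * ∑ x with f x = f a, w x := by
  have hne : (univ.image f).Nonempty := univ_nonempty.image f
  have hcard : Nat.card (Set.range f) = #(univ.image f) := by
    rw [← Set.image_univ, ← coe_univ, ← coe_image, Nat.card_eq_card_toFinset, toFinset_coe]
  have hpos : 0 < (#(univ.image f) : ℝ) := mod_cast hne.card_pos
  obtain ⟨_, hb, hle⟩ := exists_le_sum_fiber_of_maps_to_of_nsmul_le_sum (w := w)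
    (b := (∑ x, w x) / #(univ.image f)) (fun x _ => mem_image_of_mem f (mem_univ x)) hne
    (by rw [nsmul_eq_mul, mul_div_cancel₀ _ hpos.ne'])
  obtain ⟨a, -, rfl⟩ := mem_image.mp hb
  exact ⟨a, by rwa [hcard, ← div_le_iff₀' hpos]⟩

section Sequences

variable {X E P Q : Type*} [AddCommMonoid E] [Fintype P] [Fintype Q]

/-- The words with letters `g p` in `X`, indexed by `p : P`, whose `δ`-weights add up to `e`. -/
def seqsWithSum (δ : X → E) (P : Type*) [Fintype P] (e : E) : Set (P → X) :=
  {g | ∑ p, δ (g p) = e}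

/-- The total `δ`-weights of words indexed by `P`. -/
def seqSums (δ : X → E) (P : Type*) [Fintype P] : Set E :=
  Set.range fun g : P → X => ∑ p, δ (g p)

/-- The partition function of the alphabet `X` with `δ`-weights, twisted by a character `φ`. -/
noncomputable def partitionFun [Fintype X] (δ : X → E) (φ : E →+ ℝ) : ℝ :=
  ∑ a, exp (φ (δ a))

theorem one_le_partitionFun [Fintype X] {δ : X → E} (φ : E →+ ℝ) {a₀ : X} (h : δ a₀ = 0) :
    1 ≤ partitionFun δ φ := by
  simpa [partitionFun, h] using Finset.single_le_sum (f := fun a => exp (φ (δ a)))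
    (fun _ _ => (exp_pos _).le) (Finset.mem_univ a₀)

theorem card_seqsWithSum_congr (δ : X → E) (e : P ≃ Q) (x : E) :
    Nat.card (seqsWithSum δ P x) = Nat.card (seqsWithSum δ Q x) :=
  Nat.card_congr <| (e.arrowCongr (Equiv.refl X)).subtypeEquiv fun g => by
    simp [seqsWithSum, e.symm.sum_comp fun p => δ (g p)]

theorem partitionFun_pow [Fintype X] [DecidableEq P] (δ : X → E) (φ : E →+ ℝ) :
    partitionFun δ φ ^ Fintype.card P = ∑ g : P → X, exp (φ (∑ p, δ (g p))) := by
  rw [← Finset.card_univ, ← Finset.prod_const, partitionFun, Finset.prod_univ_sum,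
    Fintype.piFinset_univ]
  simp only [map_sum, exp_sum]

theorem sum_filter_exp_eq [Fintype X] [DecidableEq P] (δ : X → E) (φ : E →+ ℝ) (e : E)
    [DecidablePred fun g : P → X => ∑ p, δ (g p) = e] :
    ∑ g : P → X with ∑ p, δ (g p) = e, exp (φ (∑ p, δ (g p))) =
      Nat.card (seqsWithSum δ P e) * exp (φ e) := by
  have hcard : Nat.card (seqsWithSum δ P e) = #{g : P → X | ∑ p, δ (g p) = e} :=
    Nat.subtype_card _ (by simp [seqsWithSum])
  rw [hcard, ← nsmul_eq_mul, ← Finset.sum_const]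
  exact Finset.sum_congr rfl fun g hg => by rw [(Finset.mem_filter.mp hg).2]

theorem card_seqsWithSum_mul_exp_le [Fintype X] (δ : X → E) (φ : E →+ ℝ) (e : E) :
    Nat.card (seqsWithSum δ P e) * exp (φ e) ≤ partitionFun δ φ ^ Fintype.card P := by
  classical
  rw [partitionFun_pow, ← sum_filter_exp_eq]
  exact Finset.sum_le_univ_sum_of_nonneg fun _ => (exp_pos _).le

/- The sum of the weights of a word depends only on the multiplicities of its letters. -/
theorem card_seqSums_le [Finite X] (δ : X → E) :
    Nat.card (seqSums δ P) ≤ (Fintype.card P + 1) ^ Nat.card X := by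
  classical
  have := Fintype.ofFinite X
  let ofMult (c : X → Fin (Fintype.card P + 1)) : E := ∑ a, (c a : ℕ) • δ a
  have hsub : seqSums δ P ⊆ Set.range ofMult := by
    rintro _ ⟨g, rfl⟩
    refine ⟨fun a => ⟨#{p | g p = a}, Nat.lt_succ_of_le (Finset.card_le_univ _)⟩, ?_⟩
    change _ = ∑ p, δ (g p)
    rw [← Finset.sum_fiberwise Finset.univ g]
    refine Finset.sum_congr rfl fun a _ => ?_
    rw [Finset.sum_congr rfl fun p hp => by rw [(Finset.mem_filter.mp hp).2], Finset.sum_const]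
  calc Nat.card (seqSums δ P) ≤ Nat.card (Set.range ofMult) :=
        Nat.card_mono (Set.finite_range _) hsub
    _ ≤ Nat.card (X → Fin (Fintype.card P + 1)) := Finite.card_range_le _
    _ = (Fintype.card P + 1) ^ Nat.card X := by simp

instance finite_seqSums [Finite X] (δ : X → E) : Finite (seqSums δ P) :=
  Set.finite_range _

theorem exists_partitionFun_pow_le [Fintype X] [Nonempty X] (δ : X → E) (φ : E →+ ℝ) :
    ∃ e ∈ seqSums δ P, partitionFun δ φ ^ Fintype.card P ≤
      (Fintype.card P + 1 : ℝ) ^ Nat.card X * (Nat.card (seqsWithSum δ P e) * exp (φ e)) := by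
  classical
  obtain ⟨g, hg⟩ := exists_sum_le_card_range_mul_sum_filter
    (fun g : P → X => ∑ p, δ (g p)) (fun g => exp (φ (∑ p, δ (g p))))
  refine ⟨_, ⟨g, rfl⟩, ?_⟩
  rw [← partitionFun_pow, sum_filter_exp_eq] at hg
  refine hg.trans ?_
  gcongr
  exact_mod_cast card_seqSums_le δ

theorem prod_card_seqsWithSum_le [Finite X] (δ : X → E) (e : Q → E) :
    ∏ q, Nat.card (seqsWithSum δ P (e q)) ≤ Nat.card (seqsWithSum δ (Q × P) (∑ q, e q)) := by
  rw [← Nat.card_pi]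
  refine Nat.card_le_card_of_injective
    (fun g => ⟨fun z => (g z.1 : P → X) z.2, ?_⟩) fun g g' h => ?_
  · simp only [seqsWithSum, Set.mem_ofPred_eq, Fintype.sum_prod_type]
    exact Finset.sum_congr rfl fun q _ => (g q).2
  · ext q p
    exact congrFun (Subtype.ext_iff.mp h) (q, p)

theorem eventually_add_one_pow_le_exp (c : ℕ) {ε : ℝ} (hε : 0 < ε) :
    ∀ᶠ N : ℕ in atTop, (N + 1 : ℝ) ^ c ≤ exp (N * ε) := by
  have h := ((isLittleO_pow_exp_pos_mul_atTop c hε).comp_tendsto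
    (tendsto_atTop_add_const_right atTop (1 : ℝ) tendsto_natCast_atTop_atTop)).bound (exp_pos (-ε))
  filter_upwards [h] with N hN
  calc (N + 1 : ℝ) ^ c ≤ ‖(N + 1 : ℝ) ^ c‖ := le_norm_self _
    _ ≤ exp (-ε) * ‖exp (ε * (N + 1))‖ := hN
    _ = exp (N * ε) := by
      rw [norm_of_nonneg (exp_pos _).le, ← exp_add]
      ring_nf

theorem exists_forall_mul_le_log_card_add [Fintype X] {δ : X → E} {L L' : ℝ} (hL : L' < L)
    (hZ : ∀ φ, exp L ≤ partitionFun δ φ) :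
    ∃ N : ℕ, 0 < N ∧ ∀ φ : E →+ ℝ, ∃ e ∈ seqSums δ (Fin N),
      N * L' ≤ log (Nat.card (seqsWithSum δ (Fin N) e)) + φ e := by
  have : Nonempty X := by
    by_contra! hX
    simpa [partitionFun] using (exp_pos L).trans_le (hZ 0)
  obtain ⟨N, hpoly, hN⟩ := ((eventually_add_one_pow_le_exp (Nat.card X) (sub_pos.mpr hL)).and
    (eventually_gt_atTop 0)).exists
  refine ⟨N, hN, fun φ => ?_⟩
  obtain ⟨_, ⟨g, rfl⟩, hle⟩ := exists_partitionFun_pow_le (P := Fin N) δ φ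
  set e := ∑ p, δ (g p)
  refine ⟨e, ⟨g, rfl⟩, ?_⟩
  have hpos : 0 < Nat.card (seqsWithSum δ (Fin N) e) :=
    Nat.card_pos_iff.mpr ⟨⟨g, rfl⟩, inferInstance⟩
  rw [Fintype.card_fin] at hle
  rw [← exp_le_exp, exp_add, exp_log (by positivity)]
  refine le_of_mul_le_mul_left ?_ (exp_pos (N * (L - L')))
  calc exp (N * (L - L')) * exp (N * L') = exp L ^ N := by
        rw [← exp_add, ← exp_nat_mul]
        ring_nf
    _ ≤ partitionFun δ φ ^ N := by gcongr; exact hZ φ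
    _ ≤ (N + 1) ^ Nat.card X * (Nat.card (seqsWithSum δ (Fin N) e) * exp (φ e)) := hle
    _ ≤ exp (N * (L - L')) * (Nat.card (seqsWithSum δ (Fin N) e) * exp (φ e)) := by gcongr

theorem prod_card_seqsWithSum_pow_le [Finite X] {κ : Type*} [Fintype κ] (δ : X → E) {e : κ → E}
    {a : κ → ℕ} (ha : ∑ k, a k • e k = 0) {l : ℕ}
    (hQ : Fintype.card Q = l * (∑ k, a k) * Fintype.card P) :
    (∏ k, Nat.card (seqsWithSum δ P (e k)) ^ a k) ^ l ≤ Nat.card (seqsWithSum δ Q 0) := by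
  let f : Fin l × (Σ k, Fin (a k)) → E := fun z => e z.2.1
  have hf : ∑ z, f z = 0 := by
    simp [f, Fintype.sum_prod_type, Fintype.sum_sigma, ha]
  have hcard : Fintype.card ((Fin l × Σ k, Fin (a k)) × P) = Fintype.card Q := by
    simp [hQ]
  calc (∏ k, Nat.card (seqsWithSum δ P (e k)) ^ a k) ^ l
      = ∏ z, Nat.card (seqsWithSum δ P (f z)) := by
        simp [f, Fintype.prod_prod_type, Fintype.prod_sigma]
    _ ≤ Nat.card (seqsWithSum δ ((Fin l × Σ k, Fin (a k)) × P) (∑ z, f z)) :=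
        prod_card_seqsWithSum_le δ f
    _ = Nat.card (seqsWithSum δ Q 0) := by
        rw [hf, card_seqsWithSum_congr δ (Fintype.equivOfCardEq hcard)]

theorem exists_forall_exp_le_card_seqsWithSum {E : Type*} [AddCommGroup E] [Module.Free ℤ E]
    [Module.Finite ℤ E] [Fintype X] {δ : X → E} {L L' : ℝ} (hL : L' < L)
    (hZ : ∀ φ, exp L ≤ partitionFun δ φ) :
    ∃ M : ℕ, 0 < M ∧ ∀ (P : Type) [Fintype P], M ∣ Fintype.card P →
      exp (Fintype.card P * L') ≤ Nat.card (seqsWithSum δ P 0) := by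
  obtain ⟨L'', hL', hL''⟩ := exists_between hL
  obtain ⟨N, hN, hφ⟩ := exists_forall_mul_le_log_card_add hL'' hZ
  have := Fintype.ofFinite (seqSums δ (Fin N))
  let count (e : seqSums δ (Fin N)) : ℕ := Nat.card (seqsWithSum δ (Fin N) e)
  have hcount (e) : 0 < count e := by
    obtain ⟨_, g, rfl⟩ := e
    exact Nat.card_pos_iff.mpr ⟨⟨g, rfl⟩, inferInstance⟩
  obtain ⟨a, hpos, ha, hlog⟩ := exists_nat_weights_sum_smul_eq_zero
    (fun e : seqSums δ (Fin N) => (e : E)) (fun e => log (count e) - N * L'')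
    (fun φ => by
      obtain ⟨e, he, hle⟩ := hφ φ
      exact ⟨⟨e, he⟩, by simp only [count]; linarith⟩)
    (ε := N * (L'' - L')) (mul_pos (mod_cast hN) (sub_pos.mpr hL'))
  refine ⟨(∑ e, a e) * N, by positivity, fun P _ ⟨l, hl⟩ => ?_⟩
  have havg : (∑ e, a e : ℕ) * N * L' ≤ ∑ e, a e * log (count e) := by
    have hone : (1 : ℝ) ≤ (∑ e, a e : ℕ) := mod_cast hpos
    have hgap : 0 ≤ N * (L'' - L') := mul_nonneg N.cast_nonneg (sub_pos.mpr hL').le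
    simp only [mul_sub, Finset.sum_sub_distrib, ← Finset.sum_mul, ← Nat.cast_sum] at hlog
    linarith [mul_le_mul_of_nonneg_right hone hgap]
  calc exp (Fintype.card P * L') ≤ exp (l * ∑ e, a e * log (count e)) := by
        rw [hl, exp_le_exp]
        push_cast at havg ⊢
        linarith [mul_le_mul_of_nonneg_left havg l.cast_nonneg]
    _ = ((∏ e, count e ^ a e : ℕ) : ℝ) ^ l := by
        simp [exp_nat_mul, exp_sum, exp_log, hcount]
    _ ≤ Nat.card (seqsWithSum δ P 0) := by
        exact_mod_cast prod_card_seqsWithSum_pow_le (P := Fin N) δ ha (by simp [hl]; ring)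

end Sequences

section Arrays

variable {X E F P Q U V : Type*} [AddCommMonoid E] [AddCommMonoid F]
  [Fintype P] [Fintype Q] [Fintype U] [Fintype V] (ρ : X → E) (γ : X → F)

/-- The `P × Q` arrays with letters in `X` in which row `p` has total `ρ`-weight `r p` and
column `q` has total `γ`-weight `c q`. -/
def arraysWithMargins (r : P → E) (c : Q → F) : Set (P → Q → X) :=
  {A | (∀ p, ∑ q, ρ (A p q) = r p) ∧ ∀ q, ∑ p, γ (A p q) = c q}

/-- The row sums of `ρ` and the column sums of `γ` over an array. -/
def margins (A : P → Q → X) : (P → E) × (Q → F) :=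
  (fun p => ∑ q, ρ (A p q), fun q => ∑ p, γ (A p q))

/-- The number of `s × s` arrays with letters in `X` whose rows have total `ρ`-weight `0` and
whose columns have total `γ`-weight `0`. -/
noncomputable def balancedArrayCount (s : ℕ) : ℕ :=
  Nat.card (arraysWithMargins ρ γ (0 : Fin s → E) (0 : Fin s → F))

theorem card_arraysWithMargins_zero_eq {s : ℕ} (hP : Fintype.card P = s)
    (hQ : Fintype.card Q = s) :
    Nat.card (arraysWithMargins ρ γ (0 : P → E) (0 : Q → F)) = balancedArrayCount ρ γ s := by
  let e := Fintype.equivFinOfCardEq hP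
  let e' := Fintype.equivFinOfCardEq hQ
  refine Nat.card_congr <|
    (e.arrowCongr (e'.arrowCongr (Equiv.refl X))).subtypeEquiv fun A => and_congr ?_ ?_
  · simp [e.symm.forall_congr_left, fun p => e'.symm.sum_comp fun q => ρ (A p q)]
  · simp [e'.symm.forall_congr_left, fun q => e.symm.sum_comp fun p => γ (A p q)]

theorem card_arraysWithMargins_le [Finite X] (r : P → E) (c : Q → F) :
    Nat.card (arraysWithMargins ρ γ r c) ≤
      Nat.card (seqsWithSum (fun a => (ρ a, γ a)) (P × Q) (∑ p, r p, ∑ q, c q)) := by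
  refine Nat.card_le_card_of_injective (fun A => ⟨fun z => (A : P → Q → X) z.1 z.2, ?_⟩)
    fun A A' h => ?_
  · obtain ⟨A, hr, hc⟩ := A
    simp only [seqsWithSum, Set.mem_ofPred_eq, Prod.ext_iff, Prod.fst_sum, Prod.snd_sum]
    rw [Fintype.sum_prod_type, Fintype.sum_prod_type_right]
    simp only [hr, hc, and_self]
  · ext p q
    exact congrFun (Subtype.ext_iff.mp h) (p, q)

theorem balancedArrayCount_pos [Finite X] {a₀ : X} (hρ : ρ a₀ = 0) (hγ : γ a₀ = 0) (s : ℕ) :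
    0 < balancedArrayCount ρ γ s :=
  Nat.card_pos_iff.mpr ⟨⟨fun _ _ => a₀, by simp [hρ], by simp [hγ]⟩, inferInstance⟩

theorem balancedArrayCount_le [Fintype X] (φ : E × F →+ ℝ) (s : ℕ) :
    (balancedArrayCount ρ γ s : ℝ) ≤ partitionFun (fun a => (ρ a, γ a)) φ ^ s ^ 2 := by
  have hcard := card_arraysWithMargins_le ρ γ (0 : Fin s → E) (0 : Fin s → F)
  have hle := card_seqsWithSum_mul_exp_le (P := Fin s × Fin s) (fun a => (ρ a, γ a)) φ 0
  simp only [map_zero, exp_zero, mul_one, Fintype.card_prod, Fintype.card_fin, ← sq] at hle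
  simp only [Pi.zero_apply, Finset.sum_const_zero, Prod.mk_zero_zero] at hcard
  exact le_trans (mod_cast hcard) hle

theorem card_range_margins_le [Finite X] :
    Nat.card (Set.range (margins ρ γ : (P → Q → X) → _)) ≤
      ((Fintype.card Q + 1) ^ Nat.card X) ^ Fintype.card P *
        ((Fintype.card P + 1) ^ Nat.card X) ^ Fintype.card Q := by
  let coords (y : (P → seqSums ρ Q) × (Q → seqSums γ P)) : (P → E) × (Q → F) :=
    (fun p => y.1 p, fun q => y.2 q)
  calc Nat.card (Set.range (margins ρ γ : (P → Q → X) → _))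
      ≤ Nat.card (Set.range coords) := by
        refine Nat.card_mono (Set.finite_range _) ?_
        rintro _ ⟨A, rfl⟩
        exact ⟨(fun p => ⟨_, A p, rfl⟩, fun q => ⟨_, fun p => A p q, rfl⟩), rfl⟩
    _ ≤ Nat.card ((P → seqSums ρ Q) × (Q → seqSums γ P)) := Finite.card_range_le _
    _ = Nat.card (seqSums ρ Q) ^ Fintype.card P * Nat.card (seqSums γ P) ^ Fintype.card Q := by
        simp [Nat.card_fun]
    _ ≤ _ := by gcongr <;> exact card_seqSums_le _

theorem exists_card_seqsWithSum_le_mul_card_arraysWithMargins [Finite X] :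
    ∃ (r : P → E) (c : Q → F), ∑ p, r p = 0 ∧ ∑ q, c q = 0 ∧
      Nat.card (seqsWithSum (fun a => (ρ a, γ a)) (P × Q) 0) ≤
        ((Fintype.card Q + 1) ^ Nat.card X) ^ Fintype.card P *
          ((Fintype.card P + 1) ^ Nat.card X) ^ Fintype.card Q *
            Nat.card (arraysWithMargins ρ γ r c) := by
  classical
  let S := seqsWithSum (fun a => (ρ a, γ a)) (P × Q) 0
  cases isEmpty_or_nonempty S
  case inl => exact ⟨0, 0, by simp [S]⟩
  have := Fintype.ofFinite S
  let marginsOf (g : S) : (P → E) × (Q → F) := margins ρ γ (Function.curry g)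
  obtain ⟨g, hg⟩ := exists_sum_le_card_range_mul_sum_filter marginsOf fun _ => 1
  have hrange : Nat.card (Set.range marginsOf) ≤ Nat.card (Set.range (margins ρ γ)) :=
    Nat.card_mono (Set.finite_range _) (Set.range_subset_iff.mpr fun g => ⟨_, rfl⟩)
  have hfiber : Nat.card {g' // marginsOf g' = marginsOf g} ≤
      Nat.card (arraysWithMargins ρ γ (marginsOf g).1 (marginsOf g).2) := by
    refine Nat.card_le_card_of_injective (fun g' => ⟨Function.curry g'.1,
      congrFun (congrArg Prod.fst g'.2), congrFun (congrArg Prod.snd g'.2)⟩) fun g' g'' h => ?_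
    exact Subtype.ext (Subtype.ext (Function.curry_injective (Subtype.ext_iff.mp h)))
  have hcard : Nat.card S ≤
      Nat.card (Set.range marginsOf) * Nat.card {g' // marginsOf g' = marginsOf g} := by
    rw [Nat.subtype_card {g' | marginsOf g' = marginsOf g} (by simp)]
    simp only [Finset.sum_const, nsmul_one, Finset.card_univ, ← Nat.card_eq_fintype_card] at hg
    exact_mod_cast hg
  obtain ⟨hrow, hcol⟩ := Prod.ext_iff.mp (show ∑ z, (ρ (g.1 z), γ (g.1 z)) = 0 from g.2)
  refine ⟨(marginsOf g).1, (marginsOf g).2, ?_, ?_, ?_⟩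
  · rwa [Prod.fst_sum, Fintype.sum_prod_type] at hrow
  · rwa [Prod.snd_sum, Fintype.sum_prod_type_right] at hcol
  · exact hcard.trans (Nat.mul_le_mul (hrange.trans (card_range_margins_le ρ γ)) hfiber)

theorem card_arraysWithMargins_pow_le [Finite X] (r : P → E) (c : Q → F)
    (σ : V → Equiv.Perm P) (τ : U → Equiv.Perm Q) :
    Nat.card (arraysWithMargins ρ γ r c) ^ (Fintype.card U * Fintype.card V) ≤
      Nat.card (arraysWithMargins ρ γ (fun z : U × P => ∑ v, r (σ v z.2))
        (fun z : V × Q => ∑ u, c (τ u z.2))) := by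
  let assemble (A : U → V → arraysWithMargins ρ γ r c) (z : U × P) (y : V × Q) : X :=
    (A z.1 y.1 : P → Q → X) (σ y.1 z.2) (τ z.1 y.2)
  have hmem (A) : assemble A ∈ arraysWithMargins ρ γ (fun z : U × P => ∑ v, r (σ v z.2))
      (fun z : V × Q => ∑ u, c (τ u z.2)) := by
    refine ⟨fun z => ?_, fun z => ?_⟩
    · rw [Fintype.sum_prod_type]
      exact Finset.sum_congr rfl fun v _ =>
        (Equiv.sum_comp (τ z.1) fun q => ρ ((A z.1 v).1 (σ v z.2) q)).trans ((A z.1 v).2.1 _)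
    · rw [Fintype.sum_prod_type]
      exact Finset.sum_congr rfl fun u _ =>
        (Equiv.sum_comp (σ z.1) fun p => γ ((A u z.1).1 p (τ u z.2))).trans ((A u z.1).2.2 _)
  have hinj : Function.Injective fun A => (⟨assemble A, hmem A⟩ : arraysWithMargins ρ γ _ _) := by
    refine fun A A' h => funext₂ fun u v => Subtype.ext (funext₂ fun p q => ?_)
    simpa [assemble] using
      congrFun₂ (Subtype.ext_iff.mp h) (u, (σ v).symm p) (v, (τ u).symm q)
  rw [mul_comm, pow_mul]
  simpa [Nat.card_fun] using Nat.card_le_card_of_injective _ hinj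

theorem sum_addRight_eq_zero {G : Type*} [AddGroup G] [Fintype G] {r : G → E}
    (hr : ∑ g, r g = 0) (g : G) : ∑ u : U × G, r (Equiv.addRight u.2 g) = 0 := by
  simp only [Equiv.coe_addRight, Fintype.sum_prod_type, Finset.sum_const]
  rw [show ∑ u, r (g + u) = 0 from (Equiv.sum_comp (Equiv.addLeft g) r).trans hr, smul_zero]

/- Cyclically shifting the blocks turns zero-sum margins into zero margins: every row of the
assembled array meets each row of the blocks equally often. -/
theorem card_arraysWithMargins_pow_le_balancedArrayCount [Finite X] {N : ℕ} [NeZero N]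
    {r : Fin N → E} {c : Fin N → F} (hr : ∑ p, r p = 0) (hc : ∑ q, c q = 0) (l : ℕ) :
    Nat.card (arraysWithMargins ρ γ r c) ^ (l * N) ^ 2 ≤ balancedArrayCount ρ γ (l * N ^ 2) := by
  have hcard : Fintype.card ((Fin l × Fin N) × Fin N) = l * N ^ 2 := by
    simp [sq, mul_assoc]
  have h := card_arraysWithMargins_pow_le ρ γ r c
    (fun v : Fin l × Fin N => Equiv.addRight v.2) (fun u : Fin l × Fin N => Equiv.addRight u.2)
  simp only [sum_addRight_eq_zero hr, sum_addRight_eq_zero hc, Fintype.card_prod,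
    Fintype.card_fin, ← sq] at h
  rwa [← card_arraysWithMargins_zero_eq ρ γ hcard hcard]

theorem card_arraysWithMargins_zero_le_sum [Finite X] {a₀ : X} (hρ : ρ a₀ = 0) (hγ : γ a₀ = 0) :
    Nat.card (arraysWithMargins ρ γ (0 : P → E) (0 : Q → F)) ≤
      Nat.card (arraysWithMargins ρ γ (0 : P ⊕ U → E) (0 : Q ⊕ V → F)) := by
  refine Nat.card_le_card_of_injective (fun A => ⟨Sum.elim
    (fun p => Sum.elim ((A : P → Q → X) p) fun _ => a₀) (fun _ _ => a₀), ?_, ?_⟩) fun A A' h => ?_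
  · rintro (p | u) <;> simp [hρ, A.2.1]
  · rintro (q | v) <;> simp [hγ, A.2.2]
  · ext p q
    exact congrFun₂ (Subtype.ext_iff.mp h) (Sum.inl p) (Sum.inl q)

theorem balancedArrayCount_mono [Finite X] {a₀ : X} (hρ : ρ a₀ = 0) (hγ : γ a₀ = 0) :
    Monotone (balancedArrayCount ρ γ) := by
  intro s t hst
  have hcard : Fintype.card (Fin s ⊕ Fin (t - s)) = t := by simp [hst]
  rw [← card_arraysWithMargins_zero_eq ρ γ hcard hcard]
  exact card_arraysWithMargins_zero_le_sum ρ γ hρ hγ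

end Arrays

theorem tendsto_natDiv_mul_div_atTop {n : ℕ} (hn : 0 < n) :
    Tendsto (fun s : ℕ => ((s / n * n : ℕ) : ℝ) / s) atTop (nhds 1) := by
  have hn' : (0 : ℝ) < n := mod_cast hn
  have h := (tendsto_nat_floor_div_atTop (R := ℝ)).comp
    ((tendsto_natCast_atTop_atTop (R := ℝ)).atTop_div_const hn')
  refine h.congr fun s => ?_
  simp only [Function.comp_apply, Nat.floor_div_eq_div, Nat.cast_mul]
  field_simp

theorem eventually_sq_mul_le_of_monotone {u : ℕ → ℝ} (hu : Monotone u) {n : ℕ} (hn : 0 < n)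
    {L L' : ℝ} (hL : L' < L) (h : ∀ l : ℕ, (l * n : ℕ) ^ 2 * L ≤ u (l * n)) :
    ∀ᶠ s : ℕ in atTop, s ^ 2 * L' ≤ u s := by
  have hlim : Tendsto (fun s : ℕ => (((s / n * n : ℕ) : ℝ) / s) ^ 2 * L) atTop (nhds L) := by
    simpa using ((tendsto_natDiv_mul_div_atTop hn).pow 2).mul_const L
  filter_upwards [hlim.eventually_const_lt hL, eventually_gt_atTop 0] with s hs hpos
  calc s ^ 2 * L' ≤ s ^ 2 * ((((s / n * n : ℕ) : ℝ) / s) ^ 2 * L) := by gcongr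
    _ = (s / n * n : ℕ) ^ 2 * L := by field_simp
    _ ≤ u (s / n * n) := h _
    _ ≤ u s := hu (Nat.div_mul_le_self s n)

section Growth

variable {X E F : Type*} [Fintype X] [AddCommGroup E] [Module.Free ℤ E] [Module.Finite ℤ E]
  [AddCommGroup F] [Module.Free ℤ F] [Module.Finite ℤ F] {ρ : X → E} {γ : X → F} {a₀ : X}
  {L L' : ℝ}

theorem exists_exp_le_card_arraysWithMargins (hL : L' < L)
    (hZ : ∀ φ, exp L ≤ partitionFun (fun a => (ρ a, γ a)) φ) :
    ∃ (N : ℕ) (r : Fin N → E) (c : Fin N → F), 0 < N ∧ ∑ p, r p = 0 ∧ ∑ q, c q = 0 ∧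
      exp (N ^ 2 * L') ≤ Nat.card (arraysWithMargins ρ γ r c) := by
  obtain ⟨L'', hL', hL''⟩ := exists_between hL
  obtain ⟨M, hM, hcount⟩ := exists_forall_exp_le_card_seqsWithSum hL'' hZ
  obtain ⟨N₀, hpoly⟩ := eventually_atTop.mp
    (eventually_add_one_pow_le_exp (Nat.card X + Nat.card X) (sub_pos.mpr hL'))
  let N := M * (N₀ + 1)
  have hN : N₀ ≤ N := N₀.le_succ.trans (Nat.le_mul_of_pos_left _ hM)
  have hseq := hcount (Fin N × Fin N) (by simp [N, mul_assoc])
  obtain ⟨r, c, hr, hc, hle⟩ :=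
    exists_card_seqsWithSum_le_mul_card_arraysWithMargins (P := Fin N) (Q := Fin N) ρ γ
  refine ⟨N, r, c, by positivity, hr, hc, le_of_mul_le_mul_left ?_ (exp_pos (N * (N * (L'' - L'))))⟩
  simp only [Fintype.card_prod, Fintype.card_fin, Nat.cast_mul] at hseq hle
  calc exp (N * (N * (L'' - L'))) * exp (N ^ 2 * L') = exp (N * N * L'') := by
        rw [← exp_add]
        ring_nf
    _ ≤ _ := hseq
    _ ≤ ((N + 1) ^ Nat.card X) ^ N * ((N + 1) ^ Nat.card X) ^ N *
          Nat.card (arraysWithMargins ρ γ r c) := mod_cast hle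
    _ = ((N + 1) ^ (Nat.card X + Nat.card X)) ^ N * Nat.card (arraysWithMargins ρ γ r c) := by
        ring
    _ ≤ exp (N * (N * (L'' - L'))) * Nat.card (arraysWithMargins ρ γ r c) := by
        rw [exp_nat_mul]
        gcongr
        exact hpoly N hN

theorem exists_forall_exp_le_balancedArrayCount (hL : L' < L)
    (hZ : ∀ φ, exp L ≤ partitionFun (fun a => (ρ a, γ a)) φ) :
    ∃ n : ℕ, 0 < n ∧ ∀ l : ℕ, exp ((l * n : ℕ) ^ 2 * L') ≤ balancedArrayCount ρ γ (l * n) := by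
  obtain ⟨N, r, c, hN, hr, hc, hle⟩ := exists_exp_le_card_arraysWithMargins hL hZ
  have : NeZero N := ⟨hN.ne'⟩
  refine ⟨N ^ 2, by positivity, fun l => ?_⟩
  calc exp ((l * N ^ 2 : ℕ) ^ 2 * L') = exp (N ^ 2 * L') ^ (l * N) ^ 2 := by
        rw [← exp_nat_mul]
        push_cast
        ring_nf
    _ ≤ (Nat.card (arraysWithMargins ρ γ r c) : ℝ) ^ (l * N) ^ 2 := by gcongr
    _ ≤ balancedArrayCount ρ γ (l * N ^ 2) :=
        mod_cast card_arraysWithMargins_pow_le_balancedArrayCount ρ γ hr hc l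

theorem eventually_sq_mul_le_log_balancedArrayCount (hρ : ρ a₀ = 0) (hγ : γ a₀ = 0)
    (hL : L' < L) (hZ : ∀ φ, exp L ≤ partitionFun (fun a => (ρ a, γ a)) φ) :
    ∀ᶠ s : ℕ in atTop, s ^ 2 * L' ≤ log (balancedArrayCount ρ γ s) := by
  have hpos (s) : (0 : ℝ) < balancedArrayCount ρ γ s := mod_cast balancedArrayCount_pos ρ γ hρ hγ s
  have hmono : Monotone fun s => log (balancedArrayCount ρ γ s) := fun s t hst =>
    log_le_log (hpos s) (mod_cast balancedArrayCount_mono ρ γ hρ hγ hst)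
  obtain ⟨L'', hL', hL''⟩ := exists_between hL
  obtain ⟨n, hn, hexp⟩ := exists_forall_exp_le_balancedArrayCount hL'' hZ
  exact eventually_sq_mul_le_of_monotone hmono hn hL' fun l =>
    (le_log_iff_exp_le (hpos _)).mpr (hexp l)

theorem tendsto_log_balancedArrayCount (hρ : ρ a₀ = 0) (hγ : γ a₀ = 0) :
    Tendsto (fun s : ℕ => 1 / (s : ℝ) ^ 2 * log (balancedArrayCount ρ γ s)) atTop
      (nhds (log (sInf (Set.range (partitionFun fun a => (ρ a, γ a)))))) := by
  set Z := partitionFun fun a => (ρ a, γ a)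
  have hone (φ) : 1 ≤ Z φ := one_le_partitionFun φ (Prod.ext hρ hγ)
  have hbdd : BddBelow (Set.range Z) := ⟨1, Set.forall_mem_range.mpr hone⟩
  have hinf : 0 < sInf (Set.range Z) :=
    one_pos.trans_le (le_csInf (Set.range_nonempty Z) (Set.forall_mem_range.mpr hone))
  refine tendsto_order.mpr ⟨fun y hy => ?_, fun y hy => ?_⟩
  · obtain ⟨L, hyL, hL⟩ := exists_between hy
    filter_upwards [eventually_sq_mul_le_log_balancedArrayCount hρ hγ hL fun φ =>
      (exp_log hinf).trans_le (csInf_le hbdd ⟨φ, rfl⟩), eventually_gt_atTop 0] with s hs hpos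
    refine hyL.trans_le ?_
    rwa [one_div_mul_eq_div, le_div_iff₀' (by positivity)]
  · obtain ⟨_, ⟨φ, rfl⟩, hφ⟩ := exists_lt_of_csInf_lt (Set.range_nonempty Z)
      ((log_lt_iff_lt_exp hinf).mp hy)
    filter_upwards [eventually_gt_atTop 0] with s hpos
    refine lt_of_le_of_lt ?_ ((log_lt_iff_lt_exp (one_pos.trans_le (hone φ))).mpr hφ)
    rw [one_div_mul_eq_div, div_le_iff₀' (by positivity), ← Nat.cast_pow, ← log_pow]
    exact log_le_log (mod_cast balancedArrayCount_pos ρ γ hρ hγ s) (balancedArrayCount_le ρ γ φ s)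

end Growth

section Tables

variable {m n : ℕ} {K : Fin m → Fin n → ℕ}

/-- The `m × n` tables of nonnegative integers with entries bounded by `K`. -/
abbrev BoundedTable (K : Fin m → Fin n → ℕ) : Type := ∀ i j, Fin (K i j + 1)

/-- The row sums of a table minus the prescribed row margins `R`. -/
def rowExcess (R : Fin m → ℕ) (a : BoundedTable K) : Fin m → ℤ :=
  fun i => ∑ j, (a i j : ℤ) - R i

/-- The column sums of a table minus the prescribed column margins `C`. -/
def colExcess (C : Fin n → ℕ) (a : BoundedTable K) : Fin n → ℤ :=
  fun j => ∑ i, (a i j : ℤ) - C j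

theorem rowExcess_eq_zero_iff {R : Fin m → ℕ} {a : BoundedTable K} :
    rowExcess R a = 0 ↔ ∀ i, ∑ j, (a i j : ℕ) = R i := by
  simp only [rowExcess, funext_iff, Pi.zero_apply, sub_eq_zero]
  exact forall_congr' fun _ => by norm_cast

theorem colExcess_eq_zero_iff {C : Fin n → ℕ} {a : BoundedTable K} :
    colExcess C a = 0 ↔ ∀ j, ∑ i, (a i j : ℕ) = C j := by
  simp only [colExcess, funext_iff, Pi.zero_apply, sub_eq_zero]
  exact forall_congr' fun _ => by norm_cast

theorem sum_rowExcess_eq_zero_iff {R : Fin m → ℕ} {s : ℕ} {a : Fin s → BoundedTable K} :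
    ∑ v, rowExcess R (a v) = 0 ↔
      ∀ i, ∑ z : Fin s × Fin n, (a z.1 i z.2 : ℕ) = s * R i := by
  simp only [rowExcess, funext_iff, Finset.sum_apply, Finset.sum_sub_distrib, Pi.zero_apply,
    sub_eq_zero, Fintype.sum_prod_type, Finset.sum_const, Finset.card_univ, Fintype.card_fin,
    nsmul_eq_mul]
  exact forall_congr' fun _ => by norm_cast

theorem sum_colExcess_eq_zero_iff {C : Fin n → ℕ} {s : ℕ} {a : Fin s → BoundedTable K} :
    ∑ u, colExcess C (a u) = 0 ↔
      ∀ j, ∑ z : Fin s × Fin m, (a z.1 z.2 j : ℕ) = s * C j := by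
  simp only [colExcess, funext_iff, Finset.sum_apply, Finset.sum_sub_distrib, Pi.zero_apply,
    sub_eq_zero, Fintype.sum_prod_type, Finset.sum_const, Finset.card_univ, Fintype.card_fin,
    nsmul_eq_mul]
  exact forall_congr' fun _ => by norm_cast

theorem tableCount_clone_eq (R : Fin m → ℕ) (C : Fin n → ℕ) (s : ℕ) :
    tableCount (cloneMat s fun i j => (K i j : ℕ∞)) (cloneVec s R) (cloneVec s C) =
      balancedArrayCount (rowExcess R : BoundedTable K → _) (colExcess C) s := by
  refine (Nat.card_coe_set_eq _).symm.trans (Nat.card_congr ?_).symm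
  exact
    { toFun A := ⟨fun p q => A.1 p.1 q.1 p.2 q.2,
        fun p => sum_rowExcess_eq_zero_iff.mp (A.2.1 p.1) p.2,
        fun q => sum_colExcess_eq_zero_iff.mp (A.2.2 q.1) q.2,
        fun p q => Nat.cast_le.mpr (A.1 p.1 q.1 p.2 q.2).is_le⟩
      invFun A := ⟨fun u v i j => ⟨A.1 (u, i) (v, j),
          Nat.lt_succ_of_le (Nat.cast_le.mp (A.2.2.2 (u, i) (v, j)))⟩,
        fun u => sum_rowExcess_eq_zero_iff.mpr fun i => A.2.1 (u, i),
        fun v => sum_colExcess_eq_zero_iff.mpr fun j => A.2.2.1 (v, j)⟩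
      left_inv _ := rfl
      right_inv _ := rfl }

theorem exists_excess_eq_zero {R : Fin m → ℕ} {C : Fin n → ℕ}
    (hT : 0 < tableCount (fun i j => (K i j : ℕ∞)) R C) :
    ∃ a : BoundedTable K, rowExcess R a = 0 ∧ colExcess C a = 0 := by
  obtain ⟨A, hR, hC, hK⟩ := Set.nonempty_of_ncard_ne_zero hT.ne'
  exact ⟨fun i j => ⟨A i j, Nat.lt_succ_of_le (Nat.cast_le.mp (hK i j))⟩,
    rowExcess_eq_zero_iff.mpr hR, colExcess_eq_zero_iff.mpr hC⟩

/-- The character of `ℤ^m × ℤ^n` with coefficients `α` and `β`: the logarithm of the monomial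
`x^u y^v` at `x = exp α`, `y = exp β`. -/
def marginCharacter (α : Fin m → ℝ) (β : Fin n → ℝ) : (Fin m → ℤ) × (Fin n → ℤ) →+ ℝ where
  toFun z := ∑ i, z.1 i * α i + ∑ j, z.2 j * β j
  map_zero' := by simp
  map_add' z z' := by
    simp [add_mul, Finset.sum_add_distrib, add_add_add_comm]

theorem exists_marginCharacter_eq (φ : (Fin m → ℤ) × (Fin n → ℤ) →+ ℝ) :
    ∃ α β, marginCharacter α β = φ := by
  refine ⟨fun i => φ (Pi.single i 1, 0), fun j => φ (0, Pi.single j 1), ?_⟩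
  apply AddMonoidHom.toIntLinearMap_injective
  ext <;> simp [marginCharacter, Pi.single_apply]

theorem genFun_exp (K : Fin m → Fin n → ℕ) (α : Fin m → ℝ) (β : Fin n → ℝ) :
    genFun K (fun i => exp (α i)) (fun j => exp (β j)) =
      ∑ a : BoundedTable K, exp (∑ i, ∑ j, (a i j : ℝ) * (α i + β j)) := by
  simp only [genFun, ← exp_add, ← exp_nat_mul, Finset.sum_range, Finset.prod_univ_sum,
    Fintype.piFinset_univ, exp_sum]

theorem marginCharacter_excess (R : Fin m → ℕ) (C : Fin n → ℕ) (α : Fin m → ℝ) (β : Fin n → ℝ)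
    (a : BoundedTable K) :
    marginCharacter α β (rowExcess R a, colExcess C a) =
      ∑ i, ∑ j, (a i j : ℝ) * (α i + β j) - (∑ i, R i * α i + ∑ j, C j * β j) := by
  have hcol : ∑ i, ∑ j, (a i j : ℝ) * β j = ∑ j, (∑ i, (a i j : ℝ)) * β j := by
    rw [Finset.sum_comm]
    simp only [Finset.sum_mul]
  simp only [marginCharacter, rowExcess, colExcess, AddMonoidHom.coe_mk, ZeroHom.coe_mk,
    Int.cast_sub, Int.cast_sum, Int.cast_natCast, sub_mul, Finset.sum_sub_distrib, mul_add,
    Finset.sum_add_distrib, hcol, Finset.sum_mul]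
  ring

theorem monom_exp (α : Fin m → ℝ) (R : Fin m → ℕ) :
    monom (fun i => exp (α i)) R = exp (∑ i, R i * α i) := by
  simp only [monom, exp_sum, exp_nat_mul]

theorem partitionFun_marginCharacter (R : Fin m → ℕ) (C : Fin n → ℕ) (α : Fin m → ℝ)
    (β : Fin n → ℝ) :
    partitionFun (fun a : BoundedTable K => (rowExcess R a, colExcess C a))
        (marginCharacter α β) =
      genFun K (fun i => exp (α i)) (fun j => exp (β j)) /
        (monom (fun i => exp (α i)) R * monom (fun j => exp (β j)) C) := by
  simp only [partitionFun, marginCharacter_excess, exp_sub, genFun_exp, monom_exp, ← exp_add,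
    Finset.sum_div]

theorem setOf_genFun_div_monom_eq_range (R : Fin m → ℕ) (C : Fin n → ℕ) :
    {v : ℝ | ∃ (x : Fin m → ℝ) (y : Fin n → ℝ), (∀ i, 0 < x i) ∧ (∀ j, 0 < y j) ∧
      v = genFun K x y / (monom x R * monom y C)} =
    Set.range (partitionFun fun a : BoundedTable K => (rowExcess R a, colExcess C a)) := by
  ext v
  constructor
  · rintro ⟨x, y, hx, hy, rfl⟩
    refine ⟨marginCharacter (fun i => log (x i)) fun j => log (y j), ?_⟩
    simp only [partitionFun_marginCharacter, exp_log, hx, hy]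
  · rintro ⟨φ, rfl⟩
    obtain ⟨α, β, rfl⟩ := exists_marginCharacter_eq φ
    exact ⟨_, _, fun _ => exp_pos _, fun _ => exp_pos _, partitionFun_marginCharacter R C α β⟩

end Tables

/-- **Theorem 2.** The log-asymptotics of `T_{K^{(s)}}(R^{(s)},C^{(s)})` is given by the
infimum of `G(x,y)/(x^R y^C)` over positive `x`, `y`. -/
theorem bounded_tables_cloning_genfun_limit {m n : ℕ}
    (K : Fin m → Fin n → ℕ) (hK : ∀ i j, 0 < K i j)
    (R : Fin m → ℕ) (hR : ∀ i, 0 < R i) (C : Fin n → ℕ) (hC : ∀ j, 0 < C j)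
    (hT : 0 < tableCount (fun i j => (K i j : ℕ∞)) R C) :
    Filter.Tendsto (fun s : ℕ => (1 / (s : ℝ) ^ 2) *
      Real.log (tableCount (cloneMat s (fun i j => (K i j : ℕ∞)))
        (cloneVec s R) (cloneVec s C)))
      Filter.atTop
      (nhds (Real.log (sInf {v : ℝ | ∃ (x : Fin m → ℝ) (y : Fin n → ℝ),
        (∀ i, 0 < x i) ∧ (∀ j, 0 < y j) ∧
        v = genFun K x y / (monom x R * monom y C)}))) := by
  obtain ⟨a₀, hrow, hcol⟩ := exists_excess_eq_zero hT
  simp only [setOf_genFun_div_monom_eq_range, tableCount_clone_eq]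
  exact tendsto_log_balancedArrayCount hrow hcol
end

section
/- Let κ ∈ ℤ_{>0} ∪ {∞}, R ∈ ℤ_{≥0}^m, C ∈ ℤ_{≥0}^n with |R| = |C| = N, and assume T_κ(R,C) > 0. Then lim_{s→∞} (1/s²) ln T_κ(R^{(s)},C^{(s)}) = max_{Z ∈ Π_κ(R,C)} Σ_{i=1}^m Σ_{j=1}^n H^max_κ(z_{ij}). -/
open Real Filter Finset

/-!
Upper bound: let `W` be the set of all tables with the cloned margins. Averaging over `W` and over
the `s²` clones of each cell gives `Z ∈ Π_κ(R,C)`. Under independent entries of law `TG(z_ij; κ)`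
the logarithm of the probability of a table is affine in its entries, so the product over `W` of
these probabilities is exactly `exp(-|W| s² ∑ H^max(z_ij))`. The probabilities have sum at most
`1`, hence product at most `|W|^(-|W|)`, and `log |W| ≤ s² ∑ H^max(z_ij)` follows.

Lower bound: `Z` is approximated by rational laws of bounded support on the cells, with the same
margins. Filling every cell with an `a × a` block whose letters have the frequencies prescribed by
such a law gives about `exp(a² ∑ H)` tables whose margins are right only on average over the
clones. By pigeonhole, at the cost of a factor which is `exp(O(a log a))`, they share one and the
same vector of margins; gluing `a × a` copies of them along cyclic shifts of the clones makes all
the margins equal, so the bound is obtained for `s = a²`. It extends to all `s` because `T_s` is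
monotone in `s` and `T_t ^ (q²) ≤ T_{q t}`.
-/

section TruncatedGeometric

lemma tgMean_natCast (k : ℕ) (q : ℝ) :
    tgMean k q = (∑ t ∈ range (k + 1), (t : ℝ) * q ^ t) / ∑ t ∈ range (k + 1), q ^ t := by
  simp [tgMean]

lemma tgMean_zero_right (κ : ℕ∞) : tgMean κ 0 = 0 := by
  induction κ using ENat.recTopCoe with
  | top => simp [tgMean]
  | coe k =>
    rw [tgMean_natCast, Finset.sum_eq_zero, zero_div]
    rintro (_ | t) _ <;> simp

lemma sum_range_succ_pow_pos (k : ℕ) {q : ℝ} (hq : 0 ≤ q) : 0 < ∑ t ∈ range (k + 1), q ^ t := by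
  rw [sum_range_succ']
  positivity

lemma mul_sub_tgMean_le (k : ℕ) {q : ℝ} (hq : 1 ≤ q) :
    q * (k - tgMean k q) ≤ k * (k + 1) := by
  have hq₀ : 0 ≤ q := zero_le_one.trans hq
  have hZ := sum_range_succ_pow_pos k hq₀
  have hterm : ∀ t ∈ range (k + 1), q * ((k - t) * q ^ t) ≤ k * q ^ k := by
    intro t ht
    rcases (mem_range_succ_iff.1 ht).eq_or_lt with rfl | htk
    · simpa using by positivity
    · calc q * ((k - t) * q ^ t) = (k - t) * q ^ (t + 1) := by ring
        _ ≤ k * q ^ k := by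
          gcongr
          · linarith [(t.cast_nonneg : (0 : ℝ) ≤ t)]
          · exact htk
  calc q * (k - tgMean k q)
      = (∑ t ∈ range (k + 1), q * ((k - t) * q ^ t)) / ∑ t ∈ range (k + 1), q ^ t := by
        rw [tgMean_natCast, eq_div_iff hZ.ne', mul_assoc, sub_mul, div_mul_cancel₀ _ hZ.ne',
          ← mul_sum]
        simp only [sub_mul, sum_sub_distrib, mul_sum]
    _ ≤ (k + 1) * (k * q ^ k) / q ^ k := by
        gcongr
        · exact (sum_le_card_nsmul _ _ _ hterm).trans_eq (by simp)
        · exact single_le_sum (f := fun t => q ^ t) (fun _ _ => by positivity) (by simp)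
    _ = k * (k + 1) := by field_simp

lemma exists_le_tgMean {k : ℕ} {x : ℝ} (hxk : x < k) : ∃ q, 0 ≤ q ∧ x ≤ tgMean k q := by
  have hd : 0 < k - x := sub_pos.2 hxk
  set q := max 1 (k * (k + 1) / (k - x))
  have hq₁ : 1 ≤ q := le_max_left _ _
  refine ⟨q, zero_le_one.trans hq₁, ?_⟩
  have hle : q * (k - tgMean k q) ≤ q * (k - x) :=
    (mul_sub_tgMean_le k hq₁).trans ((div_le_iff₀ hd).1 (le_max_right _ _))
  linarith [le_of_mul_le_mul_left hle (by linarith)]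

lemma tgQ_nonneg (κ : ℕ∞) (x : ℝ) : 0 ≤ tgQ κ x := Real.sInf_nonneg fun _ h => h.1

lemma tgQ_zero_right (κ : ℕ∞) : tgQ κ 0 = 0 :=
  IsLeast.csInf_eq ⟨⟨le_rfl, (tgMean_zero_right κ).ge⟩, fun _ h => h.1⟩

lemma tgQ_top {x : ℝ} (hx : 0 ≤ x) : tgQ ⊤ x = x / (1 + x) := by
  refine IsLeast.csInf_eq ⟨⟨by positivity, ?_⟩, fun q hq => ?_⟩
  · rw [tgMean, if_pos rfl, one_sub_div (by positivity)]
    field_simp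
    simp
  · replace hq : x ≤ q / (1 - q) := hq.2
    rw [div_le_iff₀ (by positivity)]
    rcases lt_or_ge q 1 with h | h
    · rw [le_div_iff₀ (by linarith)] at hq
      linarith
    · exact (by linarith : x ≤ 1 + x).trans (le_mul_of_one_le_left (by positivity) h)

lemma tgQ_top_lt_one {x : ℝ} (hx : 0 ≤ x) : tgQ ⊤ x < 1 := by
  rw [tgQ_top hx, div_lt_one (by positivity)]
  linarith

lemma tgQ_self (k : ℕ) : tgQ k k = 0 := by
  rcases k.eq_zero_or_pos with rfl | hk
  · simpa using tgQ_zero_right 0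
  suffices {q : ℝ | 0 ≤ q ∧ (k : ℝ) ≤ tgMean k q} = ∅ by rw [tgQ, this, Real.sInf_empty]
  refine Set.eq_empty_of_forall_notMem fun q hq => hq.2.not_gt ?_
  rw [tgMean_natCast, div_lt_iff₀ (sum_range_succ_pow_pos k hq.1), mul_sum]
  refine sum_lt_sum (fun t ht => ?_) ⟨0, by simp, by simpa⟩
  have := hq.1
  gcongr
  exact mem_range_succ_iff.1 ht

lemma continuousOn_tgMean_natCast (k : ℕ) : ContinuousOn (tgMean k) (Set.Ici 0) := by
  rw [funext (tgMean_natCast k)]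
  exact ContinuousOn.div (by fun_prop) (by fun_prop) fun q hq =>
    (sum_range_succ_pow_pos k hq).ne'

lemma tgMean_tgQ {κ : ℕ∞} {x : ℝ} (hx : 0 ≤ x) (hxκ : κ ≠ ⊤ → x < κ.toNat) :
    tgMean κ (tgQ κ x) = x := by
  induction κ using ENat.recTopCoe with
  | top =>
    rw [tgMean, if_pos rfl, tgQ_top hx, one_sub_div (by positivity)]
    field_simp
    simp
  | coe k =>
    have hxk : x < k := by simpa using hxκ
    have hcont := continuousOn_tgMean_natCast k
    have hbdd : BddBelow {q : ℝ | 0 ≤ q ∧ x ≤ tgMean k q} := ⟨0, fun _ h => h.1⟩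
    have hmem : 0 ≤ tgQ k x ∧ x ≤ tgMean k (tgQ k x) :=
      (hcont.preimage_isClosed_of_isClosed isClosed_Ici isClosed_Ici).csInf_mem
        (exists_le_tgMean hxk) hbdd
    obtain ⟨q, ⟨hq₀, hqQ⟩, hq⟩ : x ∈ tgMean k '' Set.Icc 0 (tgQ k x) :=
      intermediate_value_Icc hmem.1 (hcont.mono fun q hq => hq.1)
        ⟨(tgMean_zero_right _).trans_le hx, hmem.2⟩
    rwa [← hqQ.antisymm (csInf_le hbdd ⟨hq₀, hq.ge⟩)]

lemma tgP_pos (κ : ℕ∞) {x : ℝ} (hx : 0 ≤ x) : 0 < tgP κ x := by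
  induction κ using ENat.recTopCoe with
  | top => simpa [tgP] using tgQ_top_lt_one hx
  | coe k => simpa [tgP] using sum_range_succ_pow_pos k (tgQ_nonneg k x)

lemma tgPMF_nonneg (κ : ℕ∞) {x : ℝ} (hx : 0 ≤ x) (t : ℕ) : 0 ≤ tgPMF κ x t := by
  have := tgP_pos κ hx
  have := tgQ_nonneg κ x
  unfold tgPMF
  positivity

lemma hasSum_tgPMF (κ : ℕ∞) {x : ℝ} (hx : 0 ≤ x) : HasSum (tgPMF κ x) 1 := by
  have hP := (tgP_pos κ hx).ne'
  induction κ using ENat.recTopCoe with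
  | top =>
    have h := (hasSum_geometric_of_lt_one (tgQ_nonneg ⊤ x) (tgQ_top_lt_one hx)).mul_left (tgP ⊤ x)
    rw [tgP, if_pos rfl] at h hP
    rw [mul_inv_cancel₀ hP] at h
    exact h.congr_fun fun t => by simp [tgPMF, tgP]
  | coe k =>
    have h : HasSum (tgPMF k x) (∑ t ∈ range (k + 1), tgPMF k x t) :=
      hasSum_sum_of_ne_finset_zero fun t ht => by simp_all [tgPMF]
    convert h using 1
    calc 1 = tgP k x * ∑ t ∈ range (k + 1), tgQ k x ^ t := by
          simpa [tgP] using (inv_mul_cancel₀ (sum_range_succ_pow_pos k (tgQ_nonneg k x)).ne').symm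
      _ = ∑ t ∈ range (k + 1), tgPMF k x t := by
          rw [mul_sum]
          exact sum_congr rfl fun t ht => by simp [tgPMF, mem_range_succ_iff.1 ht]

lemma hasSum_mul_tgPMF {κ : ℕ∞} {x : ℝ} (hx : 0 ≤ x) (hxκ : κ ≠ ⊤ → x < κ.toNat) :
    HasSum (fun t => t * tgPMF κ x t) x := by
  have hmean := tgMean_tgQ hx hxκ
  induction κ using ENat.recTopCoe with
  | top =>
    have hlt := tgQ_top_lt_one hx
    have hnorm : ‖tgQ ⊤ x‖ < 1 := by rwa [Real.norm_of_nonneg (tgQ_nonneg ⊤ x)]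
    have h := (hasSum_coe_mul_geometric_of_norm_lt_one hnorm).mul_left (1 - tgQ ⊤ x)
    rw [tgMean, if_pos rfl] at hmean
    have hval : (1 - tgQ ⊤ x) * (tgQ ⊤ x / (1 - tgQ ⊤ x) ^ 2) = x := by
      have : 1 - tgQ ⊤ x ≠ 0 := by linarith
      conv_rhs => rw [← hmean]
      field_simp
    rw [hval] at h
    exact h.congr_fun fun t => by simp [tgPMF, tgP]; ring
  | coe k =>
    have h : HasSum (fun t : ℕ => t * tgPMF k x t) (∑ t ∈ range (k + 1), t * tgPMF k x t) :=
      hasSum_sum_of_ne_finset_zero fun t ht => by simp_all [tgPMF]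
    convert h using 1
    rw [tgMean_natCast, div_eq_inv_mul, mul_sum] at hmean
    rw [← hmean]
    refine sum_congr rfl fun t ht => ?_
    simp [tgPMF, tgP, mem_range_succ_iff.1 ht, hmean]
    ring

lemma negMulLog_mul_pow {p : ℝ} (hp : p ≠ 0) (q : ℝ) (t : ℕ) :
    negMulLog (p * q ^ t) = -log p * (p * q ^ t) + -log q * (t * (p * q ^ t)) := by
  rcases eq_or_ne q 0 with rfl | hq
  · cases t <;> simp [negMulLog, mul_comm]
  · rw [negMulLog, Real.log_mul hp (pow_ne_zero t hq), Real.log_pow]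
    ring

lemma hasSum_negMulLog_tgPMF {κ : ℕ∞} {x : ℝ} (hx : 0 ≤ x) (hxκ : κ ≠ ⊤ → x < κ.toNat) :
    HasSum (fun t => negMulLog (tgPMF κ x t)) (-log (tgP κ x) + -log (tgQ κ x) * x) := by
  have h := ((hasSum_tgPMF κ hx).mul_left (-log (tgP κ x))).add
    ((hasSum_mul_tgPMF hx hxκ).mul_left (-log (tgQ κ x)))
  rw [mul_one] at h
  refine h.congr_fun fun t => ?_
  unfold tgPMF
  split_ifs
  · exact negMulLog_mul_pow (tgP_pos κ hx).ne' _ t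
  · simp

lemma Hmax_eq_tsum_negMulLog (κ : ℕ∞) (x : ℝ) : Hmax κ x = ∑' t, negMulLog (tgPMF κ x t) := by
  simp only [Hmax, negMulLog, neg_mul, tsum_neg]

lemma Hmax_eq {κ : ℕ∞} {x : ℝ} (hx : 0 ≤ x) (hxκ : κ ≠ ⊤ → x < κ.toNat) :
    Hmax κ x = -log (tgP κ x) + -log (tgQ κ x) * x :=
  (Hmax_eq_tsum_negMulLog κ x).trans (hasSum_negMulLog_tgPMF hx hxκ).tsum_eq

lemma Hmax_self (k : ℕ) : Hmax k k = 0 := by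
  have hterm : ∀ t, negMulLog (tgPMF k k t) = 0 := by
    rintro (_ | t) <;> simp [tgPMF, tgP, tgQ_self, sum_range_succ']
  simp [Hmax_eq_tsum_negMulLog, hterm]

end TruncatedGeometric

section Laws

/-- `w` is a probability law on `ℕ` with mean `x` and entropy `h`. -/
structure HasMeanEntropy (w : ℕ → ℝ) (x h : ℝ) : Prop where
  nonneg : ∀ t, 0 ≤ w t
  hasSum_one : HasSum w 1
  hasSum_mean : HasSum (fun t => t * w t) x
  hasSum_entropy : HasSum (fun t => negMulLog (w t)) h

lemma negMulLog_le_mul_neg_log_add_sub {w v : ℝ} (hw : 0 ≤ w) (hv : 0 < v) :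
    negMulLog w ≤ w * -log v + (v - w) := by
  rcases hw.eq_or_lt with rfl | hw
  · simpa using hv.le
  · have h := mul_le_mul_of_nonneg_left (log_le_sub_one_of_pos (div_pos hv hw)) hw.le
    rw [log_div hv.ne' hw.ne', mul_sub_one, mul_div_cancel₀ _ hw.ne'] at h
    rw [negMulLog]
    linarith

lemma HasMeanEntropy.le_mul_log_two_add_one {w : ℕ → ℝ} {x h : ℝ} (hw : HasMeanEntropy w x h) :
    h ≤ x * log 2 + 1 := by
  have hterm : ∀ t, negMulLog (w t) ≤ t * w t * log 2 + ((1 / 2) ^ t - w t) := fun t =>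
    (negMulLog_le_mul_neg_log_add_sub (hw.nonneg t) (v := (1 / 2) ^ t) (by positivity)).trans_eq
      (by rw [log_pow, log_div one_ne_zero two_ne_zero, log_one]; ring)
  have h₂ := (hw.hasSum_mean.mul_right (log 2)).add (hasSum_geometric_two.sub hw.hasSum_one)
  linarith [hasSum_le hterm hw.hasSum_entropy h₂]

/-- The law `TG(x;κ)` for `x ∈ [0, κ]`. It agrees with `tgPMF κ x` except at `x = κ`, where it is
the point mass at `κ`, while `tgPMF κ κ` is the point mass at `0` because `tgQ κ κ` is the infimum
of the empty set. -/
noncomputable def truncGeom (κ : ℕ∞) (x : ℝ) : ℕ → ℝ :=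
  if κ ≠ ⊤ ∧ x = κ.toNat then Pi.single κ.toNat 1 else tgPMF κ x

lemma truncGeom_self (k : ℕ) : truncGeom k k = Pi.single k 1 := by
  simp [truncGeom]

lemma truncGeom_of_lt {κ : ℕ∞} {x : ℝ} (hxκ : κ ≠ ⊤ → x < κ.toNat) :
    truncGeom κ x = tgPMF κ x :=
  if_neg fun h => (hxκ h.1).ne h.2

lemma lt_or_exists_eq_natCast {κ : ℕ∞} {x : ℝ} (hxκ : κ ≠ ⊤ → x ≤ κ.toNat) :
    (κ ≠ ⊤ → x < κ.toNat) ∨ ∃ k : ℕ, κ = k ∧ x = k := by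
  induction κ using ENat.recTopCoe with
  | top => simp
  | coe k => simpa using (hxκ (ENat.natCast_ne_top k)).lt_or_eq

lemma hasMeanEntropy_single (k : ℕ) : HasMeanEntropy (Pi.single k 1) k 0 where
  nonneg t := by rw [Pi.single_apply]; positivity
  hasSum_one := hasSum_pi_single k 1
  hasSum_mean := by
    convert hasSum_pi_single k (k : ℝ) using 2 with t
    rcases eq_or_ne t k with rfl | h <;> simp [*]
  hasSum_entropy := by
    convert hasSum_zero using 2 with t
    rcases eq_or_ne t k with rfl | h <;> simp [*]

lemma hasMeanEntropy_truncGeom {κ : ℕ∞} {x : ℝ} (hx : 0 ≤ x) (hxκ : κ ≠ ⊤ → x ≤ κ.toNat) :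
    HasMeanEntropy (truncGeom κ x) x (Hmax κ x) := by
  rcases lt_or_exists_eq_natCast hxκ with hlt | ⟨k, rfl, rfl⟩
  · rw [truncGeom_of_lt hlt, Hmax_eq hx hlt]
    exact ⟨tgPMF_nonneg κ hx, hasSum_tgPMF κ hx, hasSum_mul_tgPMF hx hlt,
      hasSum_negMulLog_tgPMF hx hlt⟩
  · rw [truncGeom_self, Hmax_self]
    exact hasMeanEntropy_single k

lemma truncGeom_eq_zero {κ : ℕ∞} (x : ℝ) {t : ℕ} (ht : κ < t) : truncGeom κ x t = 0 := by
  lift κ to ℕ using ht.ne_top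
  have htκ : κ < t := by exact_mod_cast ht
  unfold truncGeom
  split_ifs
  · simp [htκ.ne']
  · simp [tgPMF, htκ]

lemma truncGeom_top_zero_pos {x : ℝ} (hx : 0 ≤ x) : 0 < truncGeom ⊤ x 0 := by
  simpa [truncGeom, tgPMF] using tgP_pos ⊤ hx

lemma tgPMF_eq_exp {κ : ℕ∞} {x : ℝ} (hx : 0 ≤ x) {t : ℕ} (htκ : t ≤ κ)
    (ht : tgQ κ x = 0 → t = 0) : tgPMF κ x t = exp (log (tgP κ x) + t * log (tgQ κ x)) := by
  have hP := tgP_pos κ hx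
  rw [tgPMF, if_pos htκ, exp_add, exp_log hP]
  rcases (tgQ_nonneg κ x).eq_or_lt with h | h
  · simp [ht h.symm]
  · rw [mul_comm (t : ℝ), exp_mul, exp_log h, rpow_natCast]

/-- A family of values `≤ κ` averaging to `x` has under independent copies of `TG(x;κ)` a
probability depending only on its size. -/
lemma prod_truncGeom {ι : Type*} {s : Finset ι} {f : ι → ℕ} {κ : ℕ∞} {x : ℝ} (hx : 0 ≤ x)
    (hxκ : κ ≠ ⊤ → x ≤ κ.toNat) (hf : ∀ i ∈ s, f i ≤ κ) (hsum : ∑ i ∈ s, (f i : ℝ) = #s * x) :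
    ∏ i ∈ s, truncGeom κ x (f i) = exp (-(#s * Hmax κ x)) := by
  rcases lt_or_exists_eq_natCast hxκ with hlt | ⟨k, rfl, rfl⟩
  · have hzero : ∀ i ∈ s, tgQ κ x = 0 → f i = 0 := by
      intro i hi hQ
      have hx₀ : x = 0 := by rw [← tgMean_tgQ hx hlt, hQ, tgMean_zero_right]
      rw [hx₀, mul_zero, sum_eq_zero_iff_of_nonneg fun _ _ => by positivity] at hsum
      exact_mod_cast hsum i hi
    rw [prod_congr rfl fun i hi => by
      rw [truncGeom_of_lt hlt, tgPMF_eq_exp hx (hf i hi) (hzero i hi)], ← exp_sum,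
      sum_add_distrib, ← sum_mul, hsum, Hmax_eq hx hlt]
    simp only [sum_const, nsmul_eq_mul]
    ring_nf
  · have hle : ∀ i ∈ s, (f i : ℝ) ≤ k := fun i hi => by exact_mod_cast hf i hi
    have heq := (sum_eq_sum_iff_of_le hle).1 (by simpa using hsum)
    rw [prod_congr rfl fun i hi => by
      rw [truncGeom_self, Nat.cast_injective (heq i hi), Pi.single_eq_same]]
    simp [Hmax_self]

end Laws

section CountingBound

lemma sum_prod_le_one {ι : Type*} [Fintype ι] {v : ι → ℕ → ℝ}
    (hv : ∀ i t, 0 ≤ v i t) (hv₁ : ∀ i, HasSum (v i) 1) (W : Finset (ι → ℕ)) :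
    ∑ φ ∈ W, ∏ i, v i (φ i) ≤ 1 := by
  classical
  have hW : W ⊆ Fintype.piFinset fun i => W.image (· i) := fun φ hφ =>
    Fintype.mem_piFinset.2 fun i => mem_image_of_mem (· i) hφ
  calc ∑ φ ∈ W, ∏ i, v i (φ i)
      ≤ ∑ φ ∈ Fintype.piFinset fun i => W.image (· i), ∏ i, v i (φ i) :=
        sum_le_sum_of_subset_of_nonneg hW fun φ _ _ => prod_nonneg fun i _ => hv i _
    _ = ∏ i, ∑ t ∈ W.image (· i), v i t := (prod_univ_sum _ _).symm
    _ ≤ 1 := prod_le_one (fun i _ => sum_nonneg fun t _ => hv i t) fun i _ =>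
        sum_le_hasSum _ (fun t _ => hv i t) (hv₁ i)

lemma card_pow_card_mul_prod_le_one {α : Type*} {W : Finset α} {P : α → ℝ}
    (hP : ∀ ω ∈ W, 0 ≤ P ω) (hP₁ : ∑ ω ∈ W, P ω ≤ 1) :
    (#W : ℝ) ^ #W * ∏ ω ∈ W, P ω ≤ 1 := by
  calc (#W : ℝ) ^ #W * ∏ ω ∈ W, P ω = ∏ ω ∈ W, #W * P ω := by simp [prod_mul_distrib]
    _ ≤ ∏ ω ∈ W, exp (#W * P ω - 1) :=
        prod_le_prod (fun ω hω => mul_nonneg (by positivity) (hP ω hω)) fun ω _ => by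
          simpa using add_one_le_exp (#W * P ω - 1)
    _ = exp (#W * (∑ ω ∈ W, P ω - 1)) := by
        rw [← exp_sum, sum_sub_distrib, ← mul_sum]
        simp [mul_sub]
    _ ≤ 1 := exp_le_one_iff.2 (mul_nonpos_of_nonneg_of_nonpos (by positivity) (by linarith))

lemma log_card_le_sum_Hmax {β γ : Type*} [Fintype β] [Fintype γ] {κ : ℕ∞}
    {W : Finset (β × γ → ℕ)} (hW : W.Nonempty) (hWκ : ∀ φ ∈ W, ∀ e, φ e ≤ κ) {x : β → ℝ}
    (hx : ∀ b, 0 ≤ x b) (hxκ : ∀ b, κ ≠ ⊤ → x b ≤ κ.toNat)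
    (hmean : ∀ b, ∑ φ ∈ W, ∑ g, (φ (b, g) : ℝ) = #W * Fintype.card γ * x b) :
    log #W ≤ Fintype.card γ * ∑ b, Hmax κ (x b) := by
  classical
  have hlaw b := hasMeanEntropy_truncGeom (hx b) (hxκ b)
  have hprod : ∏ φ ∈ W, ∏ e, truncGeom κ (x e.1) (φ e) =
      exp (-(#W * (Fintype.card γ * ∑ b, Hmax κ (x b)))) :=
    calc ∏ φ ∈ W, ∏ e, truncGeom κ (x e.1) (φ e)
        = ∏ b, ∏ p ∈ W ×ˢ univ, truncGeom κ (x b) (p.1 (b, p.2)) := by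
          simp only [Fintype.prod_prod_type, prod_product]
          exact prod_comm
      _ = ∏ b, exp (-(#W * Fintype.card γ * Hmax κ (x b))) :=
          prod_congr rfl fun b _ => by
            rw [prod_truncGeom (hx b) (hxκ b) fun p hp => hWκ _ (mem_product.1 hp).1 _]
            · simp
            · simpa [sum_product] using hmean b
      _ = _ := by rw [← exp_sum, sum_neg_distrib, ← mul_sum, mul_assoc]
  have hone := card_pow_card_mul_prod_le_one
    (fun φ _ => prod_nonneg fun e _ => (hlaw e.1).nonneg (φ e))
    (sum_prod_le_one (fun e : β × γ => (hlaw e.1).nonneg) (fun e => (hlaw e.1).hasSum_one) W)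
  have hcard : (0 : ℝ) < #W := by exact_mod_cast hW.card_pos
  rw [hprod, exp_neg, ← div_eq_mul_inv, div_le_one (exp_pos _), ← log_le_iff_le_exp
    (by positivity), log_pow] at hone
  exact le_of_mul_le_mul_left hone hcard

end CountingBound

section Tables

variable {I J : Type*} [Fintype I] [Fintype J]

/-- The set of tables counted by `tableCount K R C`. -/
def tables (K : I → J → ℕ∞) (R : I → ℕ) (C : J → ℕ) : Set (I → J → ℕ) :=
  {A | (∀ i, ∑ j, A i j = R i) ∧ (∀ j, ∑ i, A i j = C j) ∧ ∀ i j, (A i j : ℕ∞) ≤ K i j}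

lemma tableCount_eq_ncard_tables (K : I → J → ℕ∞) (R : I → ℕ) (C : J → ℕ) :
    tableCount K R C = (tables K R C).ncard := rfl

lemma finite_tables (K : I → J → ℕ∞) (R : I → ℕ) (C : J → ℕ) : (tables K R C).Finite := by
  classical
  refine (Set.finite_Icc (0 : I → J → ℕ) fun i _ => R i).subset fun A hA => ⟨?_, fun i j => ?_⟩
  · exact fun i j => Nat.zero_le _
  · exact (single_le_sum (fun _ _ => Nat.zero_le _) (mem_univ j)).trans_eq (hA.1 i)

lemma tableCount_pos_iff {K : I → J → ℕ∞} {R : I → ℕ} {C : J → ℕ} :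
    0 < tableCount K R C ↔ (tables K R C).Nonempty :=
  Set.ncard_pos (finite_tables K R C)

lemma tableCount_comp_equiv {I' J' : Type*} [Fintype I'] [Fintype J'] (K : I → J → ℕ∞)
    (R : I → ℕ) (C : J → ℕ) (e : I' ≃ I) (f : J' ≃ J) :
    tableCount (fun i j => K (e i) (f j)) (R ∘ e) (C ∘ f) = tableCount K R C := by
  refine Nat.card_congr ((e.arrowCongr (f.arrowCongr (.refl ℕ))).subtypeEquiv fun A => ?_)
  have hrow i : ∑ j, A (e.symm i) (f.symm j) = ∑ j, A (e.symm i) j := f.symm.sum_comp _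
  have hcol j : ∑ i, A (e.symm i) (f.symm j) = ∑ i, A i (f.symm j) :=
    e.symm.sum_comp fun i => A i (f.symm j)
  simp [← e.symm.forall_congr_right, ← f.symm.forall_congr_right, hrow, hcol]

lemma prod_tableCount_le {P Q : Type*} [Fintype P] [Fintype Q] (K : P × I → Q × J → ℕ∞)
    (ρ : P → Q → I → ℕ) (γ : P → Q → J → ℕ) :
    ∏ p, ∏ q, tableCount (fun i j => K (p, i) (q, j)) (ρ p q) (γ p q) ≤
      tableCount K (fun x => ∑ q, ρ x.1 q x.2) (fun y => ∑ p, γ p y.1 y.2) := by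
  simp only [tableCount_eq_ncard_tables, ← Nat.card_coe_set_eq, ← Nat.card_pi]
  have := (finite_tables K (fun x => ∑ q, ρ x.1 q x.2) fun y => ∑ p, γ p y.1 y.2).to_subtype
  refine Nat.card_le_card_of_injective
    (fun A => ⟨fun x y => (A x.1 y.1).1 x.2 y.2, fun x => ?_, fun y => ?_, ?_⟩) fun A B h => ?_
  · rw [Fintype.sum_prod_type]
    exact sum_congr rfl fun q _ => (A x.1 q).2.1 x.2
  · rw [Fintype.sum_prod_type]
    exact sum_congr rfl fun p _ => (A p y.1).2.2.1 y.2
  · exact fun x y => (A x.1 y.1).2.2.2 x.2 y.2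
  · ext p q i j
    exact congrFun (congrFun (congrArg Subtype.val h) (p, i)) (q, j)

lemma exists_card_le_pow_mul_tableCount {κ : ℕ∞} {K : ℕ} (hK : K ≤ κ) {W : Finset (I → J → ℕ)}
    (hW : W.Nonempty) (hWK : ∀ A ∈ W, ∀ i j, A i j ≤ K) :
    ∃ A ∈ W, #W ≤
      ((Fintype.card I + Fintype.card J) * K + 1) ^ (Fintype.card I + Fintype.card J) *
        tableCount (fun _ _ => κ) (fun i => ∑ j, A i j) (fun j => ∑ i, A i j) := by
  classical
  let margin (A : I → J → ℕ) : I ⊕ J → ℕ := Sum.elim (fun i => ∑ j, A i j) fun j => ∑ i, A i j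
  obtain ⟨A, hA, hmax⟩ := W.exists_max_image
    (fun A => tableCount (fun _ _ => κ) (fun i => ∑ j, A i j) fun j => ∑ i, A i j) hW
  have hfiber : ∀ r ∈ W.image margin, #{B ∈ W | margin B = r} ≤
      tableCount (fun _ _ => κ) (fun i => ∑ j, A i j) fun j => ∑ i, A i j := by
    intro r hr
    obtain ⟨B, hB, rfl⟩ := mem_image.1 hr
    refine le_trans ?_ (hmax B hB)
    rw [← Set.ncard_coe_finset]
    refine Set.ncard_le_ncard (fun B' hB' => ?_) (finite_tables _ _ _)
    obtain ⟨hB'W, hB'B⟩ := mem_filter.1 (mem_coe.1 hB')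
    exact ⟨fun i => congrFun hB'B (.inl i), fun j => congrFun hB'B (.inr j),
      fun i j => hK.trans' (by exact_mod_cast hWK B' hB'W i j)⟩
  have himage : W.image margin ⊆
      Fintype.piFinset fun _ => range ((Fintype.card I + Fintype.card J) * K + 1) := by
    rintro _ hr
    obtain ⟨B, hB, rfl⟩ := mem_image.1 hr
    simp only [Fintype.mem_piFinset, mem_range_succ_iff, add_mul]
    rintro (i | j)
    · exact (sum_le_card_nsmul _ (B i) K fun j _ => hWK B hB i j).trans (by simp)
    · exact (sum_le_card_nsmul _ (B · j) K fun i _ => hWK B hB i j).trans (by simp)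
  refine ⟨A, hA, (card_le_mul_card_image W _ hfiber).trans ?_⟩
  rw [mul_comm]
  gcongr
  simpa using card_le_card himage

end Tables

section Cloning

variable {m n : ℕ} {κ : ℕ∞} {R : Fin m → ℕ} {C : Fin n → ℕ}

/-- The number `T_κ(R^{(s)}, C^{(s)})` of tables with the `s`-fold cloned margins. -/
noncomputable def cloneCount (κ : ℕ∞) (R : Fin m → ℕ) (C : Fin n → ℕ) (s : ℕ) : ℕ :=
  tableCount (fun _ _ => κ) (cloneVec s R) (cloneVec s C)

lemma tableCount_eq_cloneCount {S : Type*} [Fintype S] {s : ℕ} (hs : Fintype.card S = s) :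
    tableCount (fun (_ : S × Fin m) (_ : S × Fin n) => κ) (fun x => s * R x.2)
      (fun y => s * C y.2) = cloneCount κ R C s :=
  let e := Fintype.equivFinOfCardEq hs
  tableCount_comp_equiv (fun _ _ => κ) (cloneVec s R) (cloneVec s C)
    (e.prodCongr (.refl _)) (e.prodCongr (.refl _))

lemma prod_tableCount_le_cloneCount {P S : Type*} [Fintype P] [Fintype S] {s : ℕ}
    (hs : Fintype.card (P × S) = s)
    {ρ : P → P → S × Fin m → ℕ} {γ : P → P → S × Fin n → ℕ}
    (hρ : ∀ p x, ∑ q, ρ p q x = s * R x.2) (hγ : ∀ q y, ∑ p, γ p q y = s * C y.2) :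
    ∏ p, ∏ q, tableCount (fun _ _ => κ) (ρ p q) (γ p q) ≤ cloneCount κ R C s := by
  refine (prod_tableCount_le (fun _ _ => κ) ρ γ).trans_eq ?_
  simp only [hρ, hγ]
  rw [← tableCount_eq_cloneCount hs]
  exact tableCount_comp_equiv (fun _ _ => κ) (fun x => s * R x.2) (fun y => s * C y.2)
    (Equiv.prodAssoc P S (Fin m)).symm (Equiv.prodAssoc P S (Fin n)).symm

lemma cloneCount_pow_le (κ : ℕ∞) (R : Fin m → ℕ) (C : Fin n → ℕ) (q t : ℕ) :
    cloneCount κ R C t ^ (q * q) ≤ cloneCount κ R C (q * t) := by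
  have h := prod_tableCount_le_cloneCount (κ := κ) (R := R) (C := C) (P := Fin q) (S := Fin t)
    (s := q * t) (by simp) (ρ := fun _ _ => cloneVec t R) (γ := fun _ _ => cloneVec t C)
    (by simp [cloneVec, mul_assoc]) (by simp [cloneVec, mul_assoc])
  simpa [pow_mul, cloneCount] using h

/-- Gluing all `(p, q)`-blocks with margins shifted cyclically by `p + q` makes every row and
every column meet each shift equally often, so that only the total margins matter. -/
lemma tableCount_pow_le_cloneCount {G : Type*} [AddCommGroup G] [Fintype G]
    {ρ : G × Fin m → ℕ} {γ : G × Fin n → ℕ}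
    (hρ : ∀ i, ∑ g, ρ (g, i) = Fintype.card G * Fintype.card G * R i)
    (hγ : ∀ j, ∑ g, γ (g, j) = Fintype.card G * Fintype.card G * C j) :
    tableCount (fun _ _ => κ) ρ γ ^ (Fintype.card G * Fintype.card G) ≤
      cloneCount κ R C (Fintype.card G * Fintype.card G) := by
  have hsum {r : ℕ} (δ : G × Fin r → ℕ) (p : G) (x : G × Fin r) :
      ∑ q, δ (x.1 + (p + q), x.2) = ∑ g, δ (g, x.2) := by
    simpa [add_assoc] using Equiv.sum_comp (Equiv.addLeft (x.1 + p)) fun g => δ (g, x.2)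
  have h := prod_tableCount_le_cloneCount (κ := κ) (R := R) (C := C) (P := G) (S := G)
    (Fintype.card_prod G G) (ρ := fun p q => ρ ∘ (Equiv.addRight (p + q)).prodCongr (.refl _))
    (γ := fun p q => γ ∘ (Equiv.addRight (p + q)).prodCongr (.refl _))
    (fun p x => (hsum ρ p x).trans (hρ x.2))
    (fun q y => (sum_congr rfl fun p _ => by simp [Prod.map, add_comm p]).trans
      ((hsum γ q y).trans (hγ y.2)))
  simp only [tableCount_comp_equiv (fun _ _ => κ)] at h
  simpa [pow_mul] using h

lemma monotone_cloneCount (hT : 0 < tableCount (fun (_ : Fin m) (_ : Fin n) => κ) R C) :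
    Monotone (cloneCount κ R C) := by
  obtain ⟨B, hBR, hBC, hBκ⟩ := tableCount_pos_iff.1 hT
  refine monotone_nat_of_le_succ fun s => ?_
  have hcard : Fintype.card (Option (Fin s)) = s + 1 := by simp
  rw [← tableCount_eq_cloneCount hcard]
  refine Set.ncard_le_ncard_of_injOn (fun A x y =>
    x.1.elim (B x.2 y.2) fun p => y.1.elim (B x.2 y.2) fun q => A (p, x.2) (q, y.2))
    ?_ ?_ (finite_tables _ _ _)
  · rintro A ⟨hAR, hAC, hAκ⟩
    simp only [Fintype.sum_prod_type, cloneVec, Prod.forall] at hAR hAC hAκ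
    refine ⟨?_, ?_, ?_⟩
    · rintro ⟨_ | p, i⟩ <;>
        simp [Fintype.sum_prod_type, Fintype.sum_option, hBR, hAR, add_mul, add_comm]
    · rintro ⟨_ | q, j⟩ <;>
        simp [Fintype.sum_prod_type, Fintype.sum_option, hBC, hAC, add_mul, add_comm]
    · rintro ⟨_ | p, i⟩ ⟨_ | q, j⟩ <;> simp [hAκ, hBκ]
  · intro A _ A' _ h
    ext ⟨p, i⟩ ⟨q, j⟩
    simpa using congrFun (congrFun h (some p, i)) (some q, j)

lemma cloneCount_pos (hT : 0 < tableCount (fun (_ : Fin m) (_ : Fin n) => κ) R C) (s : ℕ) :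
    0 < cloneCount κ R C s :=
  calc 0 < cloneCount κ R C 0 := Nat.pos_of_ne_zero fun h => by
        simpa [h] using cloneCount_pow_le κ R C 0 0
    _ ≤ cloneCount κ R C s := monotone_cloneCount hT s.zero_le

end Cloning

section UpperBound

variable {m n : ℕ} {κ : ℕ∞} {R : Fin m → ℕ} {C : Fin n → ℕ}

lemma bddAbove_sum_Hmax (κ : ℕ∞) (R : Fin m → ℕ) (C : Fin n → ℕ) :
    BddAbove {v : ℝ | ∃ Z ∈ transportPolytope κ R C, v = ∑ i, ∑ j, Hmax κ (Z i j)} := by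
  refine ⟨(∑ i, (R i : ℝ)) * log 2 + m * n, ?_⟩
  rintro _ ⟨Z, ⟨hZ₀, hZκ, hZR, -⟩, rfl⟩
  calc ∑ i, ∑ j, Hmax κ (Z i j)
      ≤ ∑ i, ∑ j, (Z i j * log 2 + 1) := sum_le_sum fun i _ => sum_le_sum fun j _ =>
        (hasMeanEntropy_truncGeom (hZ₀ i j) (hZκ i j)).le_mul_log_two_add_one
    _ = (∑ i, (R i : ℝ)) * log 2 + m * n := by
        simp [sum_add_distrib, ← sum_mul, hZR]

lemma sum_row_blocks {s : ℕ} {A : Fin s × Fin m → Fin s × Fin n → ℕ}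
    (hA : A ∈ tables (fun _ _ => κ) (cloneVec s R) (cloneVec s C)) (i : Fin m) :
    ∑ j, ∑ g : Fin s × Fin s, A (g.1, i) (g.2, j) = s ^ 2 * R i :=
  calc ∑ j, ∑ g : Fin s × Fin s, A (g.1, i) (g.2, j)
      = ∑ p, ∑ y, A (p, i) y := by
        simp only [Fintype.sum_prod_type]
        exact sum_comm.trans (sum_congr rfl fun p _ => sum_comm)
    _ = ∑ _p : Fin s, s * R i := sum_congr rfl fun p _ => hA.1 (p, i)
    _ = s ^ 2 * R i := by simp [sq, mul_assoc]

lemma sum_col_blocks {s : ℕ} {A : Fin s × Fin m → Fin s × Fin n → ℕ}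
    (hA : A ∈ tables (fun _ _ => κ) (cloneVec s R) (cloneVec s C)) (j : Fin n) :
    ∑ i, ∑ g : Fin s × Fin s, A (g.1, i) (g.2, j) = s ^ 2 * C j :=
  calc ∑ i, ∑ g : Fin s × Fin s, A (g.1, i) (g.2, j)
      = ∑ q, ∑ x, A x (q, j) := by
        simp only [Fintype.sum_prod_type_right]
        exact sum_comm
    _ = ∑ _q : Fin s, s * C j := sum_congr rfl fun q _ => hA.2.1 (q, j)
    _ = s ^ 2 * C j := by simp [sq, mul_assoc]

lemma blockMean_mem_transportPolytope {s : ℕ} (hs : 0 < s)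
    {W : Finset (Fin s × Fin m → Fin s × Fin n → ℕ)} (hW : W.Nonempty)
    (hWT : ∀ A ∈ W, A ∈ tables (fun _ _ => κ) (cloneVec s R) (cloneVec s C)) :
    (fun i j => (∑ A ∈ W, ∑ g : Fin s × Fin s, (A (g.1, i) (g.2, j) : ℝ)) / (#W * s ^ 2)) ∈
      transportPolytope κ R C := by
  have hpos : (0 : ℝ) < #W * s ^ 2 :=
    mul_pos (by exact_mod_cast hW.card_pos) (by positivity)
  refine ⟨fun i j => by positivity, fun i j hκ => ?_, fun i => ?_, fun j => ?_⟩
  · have hle : ∀ A ∈ W, ∑ g : Fin s × Fin s, (A (g.1, i) (g.2, j) : ℝ) ≤ s ^ 2 * κ.toNat :=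
      fun A hA => (sum_le_card_nsmul _ _ (κ.toNat : ℝ) fun g _ => by
        exact_mod_cast ENat.toNat_le_toNat ((hWT A hA).2.2 _ _) hκ).trans_eq (by simp [sq])
    rw [div_le_iff₀' hpos, mul_assoc, ← nsmul_eq_mul]
    exact sum_le_card_nsmul _ _ _ hle
  · have hrow : ∀ A ∈ W, ∑ j, ∑ g : Fin s × Fin s, (A (g.1, i) (g.2, j) : ℝ) = s ^ 2 * R i :=
      fun A hA => by exact_mod_cast sum_row_blocks (hWT A hA) i
    rw [← sum_div, div_eq_iff hpos.ne', sum_comm, sum_congr rfl hrow, sum_const, nsmul_eq_mul,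
      ← mul_assoc, mul_comm]
  · have hcol : ∀ A ∈ W, ∑ i, ∑ g : Fin s × Fin s, (A (g.1, i) (g.2, j) : ℝ) = s ^ 2 * C j :=
      fun A hA => by exact_mod_cast sum_col_blocks (hWT A hA) j
    rw [← sum_div, div_eq_iff hpos.ne', sum_comm, sum_congr rfl hcol, sum_const, nsmul_eq_mul,
      ← mul_assoc, mul_comm]

lemma exists_log_cloneCount_le {s : ℕ} (hs : 0 < s) (hT : 0 < cloneCount κ R C s) :
    ∃ Z ∈ transportPolytope κ R C, log (cloneCount κ R C s) ≤ s ^ 2 * ∑ i, ∑ j, Hmax κ (Z i j) := by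
  classical
  have hfin := finite_tables (fun _ _ => κ) (cloneVec s R) (cloneVec s C)
  set W := hfin.toFinset
  have hWT : ∀ A ∈ W, A ∈ tables (fun _ _ => κ) (cloneVec s R) (cloneVec s C) :=
    fun A hA => hfin.mem_toFinset.1 hA
  have hcard : cloneCount κ R C s = #W := Set.ncard_eq_toFinset_card _ hfin
  have hW : W.Nonempty := card_pos.1 (hcard ▸ hT)
  obtain ⟨blocks, hblocks⟩ : ∃ blocks : (Fin s × Fin m → Fin s × Fin n → ℕ) ↪
      ((Fin m × Fin n) × (Fin s × Fin s) → ℕ),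
      ∀ A b g, blocks A (b, g) = A (g.1, b.1) (g.2, b.2) :=
    ⟨⟨fun A e => A (e.2.1, e.1.1) (e.2.2, e.1.2), fun A B h => by
      ext x y
      exact congrFun h ((x.2, y.2), (x.1, y.1))⟩, fun _ _ _ => rfl⟩
  have hZ := blockMean_mem_transportPolytope hs hW hWT
  refine ⟨_, hZ, ?_⟩
  have h := log_card_le_sum_Hmax (κ := κ) (W := W.map blocks) (by simpa using hW)
    (by simpa [hblocks] using fun A hA i j p q => (hWT A hA).2.2 (p, i) (q, j))
    (fun b => hZ.1 b.1 b.2) (fun b => hZ.2.1 b.1 b.2) fun b => by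
      have : (#W : ℝ) ≠ 0 := by exact_mod_cast hW.card_pos.ne'
      simp only [card_map, sum_map, Fintype.card_prod, Fintype.card_fin, Nat.cast_mul, hblocks]
      field_simp
  simpa [hcard, Fintype.sum_prod_type, sq] using h

lemma transportPolytope_nonempty (hT : 0 < tableCount (fun (_ : Fin m) (_ : Fin n) => κ) R C) :
    (transportPolytope κ R C).Nonempty :=
  let ⟨Z, hZ, _⟩ := exists_log_cloneCount_le one_pos (cloneCount_pos hT 1)
  ⟨Z, hZ⟩

end UpperBound

section QuadraticGrowth

variable {f : ℕ → ℝ}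

lemma eventually_lt_div_sq (hf : Monotone f) (hmul : ∀ q t : ℕ, (q : ℝ) ^ 2 * f t ≤ f (q * t))
    {t : ℕ} (ht : 0 < t) {u : ℝ} (hu : u < f t / t ^ 2) :
    ∀ᶠ s : ℕ in atTop, u < f s / s ^ 2 := by
  have hfloor : Tendsto (fun s : ℕ => ((s / t : ℕ) : ℝ) / s) atTop (nhds (t : ℝ)⁻¹) := by
    have h := (tendsto_nat_floor_mul_div_atTop (R := ℝ) (a := (t : ℝ)⁻¹) (by positivity)).comp
      tendsto_natCast_atTop_atTop
    refine h.congr fun s => ?_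
    rw [Function.comp_apply, inv_mul_eq_div, Nat.floor_div_natCast, Nat.floor_natCast]
  have hlim : Tendsto (fun s : ℕ => (((s / t : ℕ) : ℝ) / s) ^ 2 * f t) atTop
      (nhds (f t / t ^ 2)) := by
    simpa [inv_pow, div_eq_inv_mul] using (hfloor.pow 2).mul_const (f t)
  filter_upwards [hlim.eventually_const_lt hu] with s hs
  calc u < (((s / t : ℕ) : ℝ) / s) ^ 2 * f t := hs
    _ = ((s / t : ℕ) : ℝ) ^ 2 * f t / s ^ 2 := by ring
    _ ≤ f s / s ^ 2 := by
        gcongr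
        exact (hmul _ t).trans (hf (Nat.div_mul_le_self s t))

lemma tendsto_div_sq (hf : Monotone f) (hmul : ∀ q t : ℕ, (q : ℝ) ^ 2 * f t ≤ f (q * t)) {M : ℝ}
    (hle : ∀ s, 0 < s → f s ≤ s ^ 2 * M) (hlt : ∀ u < M, ∃ t, 0 < t ∧ u < f t / t ^ 2) :
    Tendsto (fun s => f s / s ^ 2) atTop (nhds M) := by
  refine tendsto_order.2 ⟨fun u hu => ?_, fun u hu => ?_⟩
  · obtain ⟨t, ht, htu⟩ := hlt u hu
    exact eventually_lt_div_sq hf hmul ht htu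
  · filter_upwards [eventually_gt_atTop 0] with s hs
    exact ((div_le_iff₀' (by positivity)).2 (hle s hs)).trans_lt hu

end QuadraticGrowth

section TypeClasses

variable {α β : Type*} [Fintype α] [Fintype β] [DecidableEq α] [DecidableEq β]

/-- The type class of `k` in the sense of information theory: the words `α → β` in which each
letter `b` occurs `k b` times. -/
def typeClass (k : β → ℕ) : Finset (α → β) := {φ | ∀ b, #{x | φ x = b} = k b}

lemma mem_typeClass {k : β → ℕ} {φ : α → β} : φ ∈ typeClass k ↔ ∀ b, #{x | φ x = b} = k b := by
  simp [typeClass]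

lemma typeClass_nonempty {k : β → ℕ} (hk : ∑ b, k b = Fintype.card α) :
    (typeClass (α := α) k).Nonempty := by
  let e : α ≃ Σ b, Fin (k b) := Fintype.equivOfCardEq (by simp [hk])
  refine ⟨fun x => (e x).1, mem_typeClass.2 fun b => ?_⟩
  rw [← Fintype.card_subtype,
    Fintype.card_congr (e.subtypeEquiv (q := fun y => y.1 = b) fun _ => Iff.rfl),
    Fintype.card_congr (Equiv.sigmaSubtype b), Fintype.card_fin]

lemma sum_comp_of_mem_typeClass {M : Type*} [AddCommMonoid M] {k : β → ℕ} {φ : α → β}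
    (hφ : φ ∈ typeClass k) (f : β → M) : ∑ x, f (φ x) = ∑ b, k b • f b := by
  rw [← sum_fiberwise univ φ]
  refine sum_congr rfl fun b _ => ?_
  rw [sum_congr rfl fun x hx => congrArg f (mem_filter.1 hx).2, sum_const, mem_typeClass.1 hφ]

lemma factorial_card_le {k : β → ℕ} (hk : ∑ b, k b = Fintype.card α) :
    (Fintype.card α).factorial ≤ (∏ b, (k b).factorial) * #(typeClass (α := α) k) := by
  obtain ⟨φ, hφ⟩ := typeClass_nonempty hk
  have hstab : Nat.card (MulAction.stabilizer (Equiv.Perm α)ᵈᵐᵃ φ) = ∏ b, (k b).factorial := by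
    rw [Nat.card_congr MulOpposite.opEquiv,
      Nat.card_congr (DomMulAct.stabilizerMulEquiv φ).toEquiv, Nat.card_pi]
    exact prod_congr rfl fun b _ => by
      rw [Nat.card_perm, Nat.card_eq_fintype_card, Fintype.card_subtype, mem_typeClass.1 hφ b]
  have horbit : MulAction.orbit (Equiv.Perm α)ᵈᵐᵃ φ ⊆ (typeClass k : Finset (α → β)) := by
    rintro _ ⟨g, rfl⟩
    refine mem_typeClass.2 fun b => ?_
    rw [← mem_typeClass.1 hφ b]
    exact card_equiv (DomMulAct.mk.symm g) (by simp [DomMulAct.smul_apply])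
  calc (Fintype.card α).factorial
      = Nat.card (Equiv.Perm α)ᵈᵐᵃ := by
        rw [← Nat.card_eq_fintype_card, ← Nat.card_perm, Nat.card_congr DomMulAct.mk]
    _ = (∏ b, (k b).factorial) * (MulAction.orbit (Equiv.Perm α)ᵈᵐᵃ φ).ncard := by
        rw [← hstab, ← MulAction.index_stabilizer, Subgroup.card_mul_index]
    _ ≤ (∏ b, (k b).factorial) * #(typeClass (α := α) k) := by
        rw [← Set.ncard_coe_finset]
        gcongr
        exact finite_toSet _

lemma log_factorial_le (n : ℕ) : log n.factorial ≤ n * log n - n + log n + 1 := by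
  rcases n.eq_zero_or_pos with rfl | hn
  · simp
  induction n, hn using Nat.le_induction with
  | base => simp
  | succ n hn ih =>
    have hlog : 1 ≤ ((n : ℝ) + 1) * (log (n + 1) - log n) := by
      rw [← log_div (by positivity) (by positivity)]
      calc (1 : ℝ) = (n + 1) * (1 - ((n + 1 : ℝ) / n)⁻¹) := by field_simp; ring
        _ ≤ (n + 1) * log ((n + 1) / n) := by
            gcongr
            exact one_sub_inv_le_log_of_pos (by positivity)
    rw [Nat.factorial_succ, Nat.cast_mul, log_mul (by positivity) (by positivity)]
    push_cast
    linarith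

lemma le_log_factorial (n : ℕ) : n * log n - n ≤ log n.factorial := by
  rcases n.eq_zero_or_pos with rfl | hn
  · simp
  have h := log_le_log (by positivity) (pow_div_factorial_le_exp n n.cast_nonneg n)
  rw [log_exp, log_div (by positivity) (by positivity), log_pow] at h
  linarith

lemma mul_negMulLog_div (x : ℝ) {y : ℝ} (hy : y ≠ 0) :
    y * negMulLog (x / y) = x * log y - x * log x := by
  rcases eq_or_ne x 0 with rfl | hx
  · simp
  · rw [negMulLog, log_div hx hy]
    field_simp
    ring

lemma le_log_card_typeClass [Nonempty α] {k : β → ℕ} (hk : ∑ b, k b = Fintype.card α) :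
    Fintype.card α * ∑ b, negMulLog (k b / Fintype.card α) -
      Fintype.card β * (log (Fintype.card α) + 1) ≤ log #(typeClass (α := α) k) := by
  have hcount : log (Fintype.card α).factorial ≤
      ∑ b, log (k b).factorial + log #(typeClass (α := α) k) := by
    have hpos := (typeClass_nonempty hk).card_pos
    rw [← log_prod fun b _ => by positivity, ← log_mul
      (prod_ne_zero_iff.2 fun b _ => by positivity) (by positivity)]
    exact log_le_log (by positivity) (by exact_mod_cast factorial_card_le hk)
  set M := Fintype.card α
  have hM : (M : ℝ) ≠ 0 := by exact_mod_cast Fintype.card_ne_zero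
  have hletter : ∀ b ∈ univ, log (k b).factorial ≤
      k b * (log M - 1) + (log M + 1) - M * negMulLog (k b / M) := by
    intro b hb
    have hkM : log (k b) ≤ log M := by
      rcases (k b).eq_zero_or_pos with h | h
      · simpa [h] using log_natCast_nonneg M
      · exact log_le_log (by positivity)
          (by exact_mod_cast hk ▸ single_le_sum (fun _ _ => Nat.zero_le _) hb)
    linarith [log_factorial_le (k b), mul_negMulLog_div (k b) hM]
  have hsum := sum_le_sum hletter
  rw [sum_sub_distrib, sum_add_distrib, ← sum_mul, ← mul_sum, ← Nat.cast_sum, hk, sum_const,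
    nsmul_eq_mul, card_univ] at hsum
  linarith [le_log_factorial M]

end TypeClasses

section CellLaws

variable {I J : Type*} [Fintype I] [Fintype J] {R : I → ℕ} {C : J → ℕ} {K : ℕ}

/-- A family, indexed by the cells `(i, j)` of a table, of mass distributions on `{0, …, K}` of
total mass `N` each, whose cell means `(∑ t, t * w i j t) / N` form a matrix with margins `R` and
`C`. Total masses are not normalized so that the notion makes sense over `ℝ`, `ℚ` and `ℕ`. -/
structure IsCellLaw {𝕜 : Type*} [Semiring 𝕜] [PartialOrder 𝕜] (R : I → ℕ) (C : J → ℕ) (N : 𝕜)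
    (w : I → J → Fin (K + 1) → 𝕜) : Prop where
  nonneg : ∀ i j t, 0 ≤ w i j t
  sum_eq : ∀ i j, ∑ t, w i j t = N
  sum_row : ∀ i, ∑ j, ∑ t : Fin (K + 1), (t : ℕ) * w i j t = N * R i
  sum_col : ∀ j, ∑ i, ∑ t : Fin (K + 1), (t : ℕ) * w i j t = N * C j

/-- The total entropy of a family of mass distributions on `{0, …, K}` indexed by the cells of a
table. -/
noncomputable def cellEntropy (w : I → J → Fin (K + 1) → ℝ) : ℝ :=
  ∑ i, ∑ j, ∑ t, negMulLog (w i j t)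

lemma continuous_cellEntropy :
    Continuous (cellEntropy : (I → J → Fin (K + 1) → ℝ) → ℝ) := by
  unfold cellEntropy
  fun_prop

lemma IsCellLaw.const_mul {𝕜 : Type*} [CommSemiring 𝕜] [PartialOrder 𝕜] [IsOrderedRing 𝕜]
    {N c : 𝕜} {w : I → J → Fin (K + 1) → 𝕜} (hw : IsCellLaw R C N w) (hc : 0 ≤ c) :
    IsCellLaw R C (c * N) fun i j t => c * w i j t where
  nonneg i j t := mul_nonneg hc (hw.nonneg i j t)
  sum_eq i j := by rw [← mul_sum, hw.sum_eq]
  sum_row i := by simp only [mul_left_comm _ c, ← mul_sum, hw.sum_row, mul_assoc]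
  sum_col j := by simp only [mul_left_comm _ c, ← mul_sum, hw.sum_col, mul_assoc]

lemma IsCellLaw.of_natCast {𝕜 : Type*} [Semiring 𝕜] [PartialOrder 𝕜] [CharZero 𝕜] {N : ℕ}
    {k : I → J → Fin (K + 1) → ℕ} (hk : IsCellLaw R C (N : 𝕜) fun i j t => (k i j t : 𝕜)) :
    IsCellLaw R C N k where
  nonneg _ _ _ := Nat.zero_le _
  sum_eq i j := by exact_mod_cast hk.sum_eq i j
  sum_row i := by exact_mod_cast hk.sum_row i
  sum_col j := by exact_mod_cast hk.sum_col j

lemma exists_nat_mul_eq_natCast {ι : Type*} [Finite ι] {w : ι → ℚ} (hw : ∀ e, 0 ≤ w e) :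
    ∃ D : ℕ, 0 < D ∧ ∃ k : ι → ℕ, ∀ e, D * w e = k e := by
  have := Fintype.ofFinite ι
  refine ⟨∏ e, (w e).den, prod_pos fun e _ => (w e).pos, ?_⟩
  choose c hc using fun e => dvd_prod_of_mem (fun e => (w e).den) (mem_univ e)
  refine ⟨fun e => c e * (w e).num.toNat, fun e => ?_⟩
  have hnum : ((w e).num.toNat : ℚ) = (w e).num := by
    exact_mod_cast Int.toNat_of_nonneg (Rat.num_nonneg.2 (hw e))
  rw [hc e]
  push_cast
  rw [hnum, mul_comm, ← mul_assoc, Rat.mul_den_eq_num, mul_comm]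

lemma IsCellLaw.exists_nat_isCellLaw {w : I → J → Fin (K + 1) → ℚ} (hw : IsCellLaw R C 1 w) :
    ∃ D : ℕ, 0 < D ∧ ∃ k : I → J → Fin (K + 1) → ℕ, IsCellLaw R C D k ∧
      ∀ i j t, (k i j t : ℚ) = D * w i j t := by
  obtain ⟨D, hD, k, hk⟩ := exists_nat_mul_eq_natCast
    (w := fun e : I × J × Fin (K + 1) => w e.1 e.2.1 e.2.2) fun e => hw.nonneg _ _ _
  refine ⟨D, hD, fun i j t => k (i, j, t), .of_natCast (𝕜 := ℚ) ?_, fun i j t => (hk _).symm⟩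
  simpa only [← hk, mul_one] using hw.const_mul (c := (D : ℚ)) (by positivity)

lemma IsCellLaw.map_ratLinear {w : I → J → Fin (K + 1) → ℝ} (hw : IsCellLaw R C 1 w)
    {φ : ℝ →ₗ[ℚ] ℚ} (hφ : φ 1 = 1) (hφw : ∀ i j t, 0 ≤ φ (w i j t)) :
    IsCellLaw R C 1 fun i j t => φ (w i j t) := by
  have hnat_mul (k : ℕ) (x : ℝ) : φ (k * x) = k * φ x := by simpa using map_nsmul φ k x
  have hnat (k : ℕ) : φ k = k := by simpa [hφ] using hnat_mul k 1
  refine ⟨hφw, fun i j => ?_, fun i => ?_, fun j => ?_⟩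
  · rw [← map_sum, hw.sum_eq, hφ]
  · simpa [hnat_mul, hnat] using congrArg φ (hw.sum_row i)
  · simpa [hnat_mul, hnat] using congrArg φ (hw.sum_col j)

end CellLaws

section RationalApproximation

/-- Moving the coordinates of `1` and the `w e` in a Hamel basis slightly to rational values is a
small perturbation, because each `w e` is a finite rational combination of basis vectors. -/
lemma exists_ratLinear_mem_nhds {ι : Type*} {w : ι → ℝ} {s : Set (ι → ℝ)} (hs : s ∈ nhds w) :
    ∃ φ : ℝ →ₗ[ℚ] ℚ, φ 1 = 1 ∧ (fun e => (φ (w e) : ℝ)) ∈ s := by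
  let b := Module.Basis.ofVectorSpace ℚ ℝ
  let eval (x : ℝ) (y : Module.Basis.ofVectorSpaceIndex ℚ ℝ → ℝ) : ℝ :=
    (b.repr x).sum fun k c => (c : ℝ) * y k
  have hcont (x : ℝ) : Continuous (eval x) :=
    continuous_finsetSum _ fun k _ => continuous_const.mul (continuous_apply k)
  have hself (x : ℝ) : eval x b = x := by
    conv_rhs => rw [← b.linearCombination_repr x, Finsupp.linearCombination_apply]
    simp only [eval, Rat.smul_def]
  have hone : ∀ᶠ y in nhds (b : _ → ℝ), eval 1 y ≠ 0 :=
    (hcont 1).continuousAt.eventually_ne (by simp [hself])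
  have hnear : ∀ᶠ y in nhds (b : _ → ℝ), (fun e => eval (w e) y / eval 1 y) ∈ s := by
    have hlim : ContinuousAt (fun y e => eval (w e) y / eval 1 y) b :=
      continuousAt_pi.2 fun e =>
        (hcont _).continuousAt.div (hcont 1).continuousAt (by simp [hself])
    exact hlim (by simpa [hself] using hs)
  have hdense : DenseRange fun (y : Module.Basis.ofVectorSpaceIndex ℚ ℝ → ℚ) k => (y k : ℝ) :=
    DenseRange.piMap fun _ => Rat.denseRange_cast
  obtain ⟨y, hy, hys⟩ := hdense.mem_nhds (hone.and hnear)
  let φ : ℝ →ₗ[ℚ] ℚ := b.constr ℚ y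
  have hφ (x : ℝ) : (φ x : ℝ) = eval x fun k => y k := by
    simp [φ, eval, Module.Basis.constr_apply, Finsupp.sum]
  simp only [← hφ, Rat.cast_ne_zero] at hy hys
  exact ⟨(φ 1)⁻¹ • φ, by simp [hy], by simpa [div_eq_inv_mul] using hys⟩

lemma IsCellLaw.exists_rat_lt_cellEntropy {I J : Type*} [Fintype I] [Fintype J] {R : I → ℕ}
    {C : J → ℕ} {K : ℕ} {w : I → J → Fin (K + 1) → ℝ} (hw : IsCellLaw R C 1 w) {u : ℝ}
    (hu : u < cellEntropy w) :
    ∃ v : I → J → Fin (K + 1) → ℚ, IsCellLaw R C 1 v ∧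
      u < cellEntropy fun i j t => (v i j t : ℝ) := by
  have hpos : ∀ᶠ v in nhds fun e : I × J × Fin (K + 1) => w e.1 e.2.1 e.2.2,
      ∀ i j t, 0 < w i j t → 0 < v (i, j, t) := by
    simp only [eventually_all]
    exact fun i j t h => (continuous_apply (i, j, t)).continuousAt.eventually_const_lt h
  have hent : ∀ᶠ v in nhds fun e : I × J × Fin (K + 1) => w e.1 e.2.1 e.2.2,
      u < cellEntropy fun i j t => v (i, j, t) :=
    (continuous_cellEntropy.comp (by fun_prop)).continuousAt.eventually_const_lt hu
  obtain ⟨φ, hφ, hφpos, hφu⟩ := exists_ratLinear_mem_nhds (hpos.and hent)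
  refine ⟨_, hw.map_ratLinear hφ fun i j t => ?_, hφu⟩
  rcases (hw.nonneg i j t).eq_or_lt with h | h
  · simp [← h]
  · have hreal : (0 : ℝ) < φ (w i j t) := hφpos i j t h
    exact_mod_cast hreal.le

end RationalApproximation

section Truncation

/-- The mass which `truncLaw w x K` puts on `K + 1` to keep the mean equal to `x`. -/
noncomputable def overflow (w : ℕ → ℝ) (x : ℝ) (K : ℕ) : ℝ :=
  (x - ∑ t ∈ range (K + 1), t * w t) / (K + 1 : ℕ)

/-- The restriction of `w` to `{0, …, K}`, completed to a signed law on `{0, …, K + 1}` with mean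
`x` by adding mass at the two points `0` and `K + 1` only. -/
noncomputable def truncLaw (w : ℕ → ℝ) (x : ℝ) (K t : ℕ) : ℝ :=
  if t = 0 then w 0 + (1 - ∑ t ∈ range (K + 1), w t - overflow w x K)
  else if t = K + 1 then overflow w x K else w t

lemma sum_truncLaw (w : ℕ → ℝ) (x : ℝ) (K : ℕ) (F : ℕ → ℝ → ℝ) :
    ∑ t : Fin (K + 1 + 1), F t (truncLaw w x K t) = ∑ t ∈ range (K + 1), F t (w t) +
      (F 0 (truncLaw w x K 0) - F 0 (w 0)) + F (K + 1) (overflow w x K) := by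
  have hmid : ∀ t ∈ range K, F (t + 1) (truncLaw w x K (t + 1)) = F (t + 1) (w (t + 1)) := by
    intro t ht
    simp [truncLaw, (mem_range.1 ht).ne]
  rw [Fin.sum_univ_eq_sum_range fun t => F t (truncLaw w x K t), sum_range_succ, sum_range_succ',
    sum_range_succ' fun t => F t (w t), sum_congr rfl hmid]
  have htop : truncLaw w x K (K + 1) = overflow w x K := by simp [truncLaw]
  rw [htop]
  ring

lemma sum_truncLaw_eq_one (w : ℕ → ℝ) (x : ℝ) (K : ℕ) :
    ∑ t : Fin (K + 1 + 1), truncLaw w x K t = 1 := by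
  rw [sum_truncLaw w x K fun _ y => y, truncLaw, if_pos rfl]
  ring

lemma sum_mul_truncLaw (w : ℕ → ℝ) (x : ℝ) (K : ℕ) :
    ∑ t : Fin (K + 1 + 1), (t : ℕ) * truncLaw w x K t = x := by
  rw [sum_truncLaw w x K fun t y => t * y, overflow, mul_div_cancel₀ _ (by positivity)]
  simp

variable {w : ℕ → ℝ} {x h : ℝ}

lemma HasMeanEntropy.overflow_nonneg (hw : HasMeanEntropy w x h) (K : ℕ) : 0 ≤ overflow w x K :=
  div_nonneg (sub_nonneg.2 <| sum_le_hasSum _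
    (fun t _ => mul_nonneg t.cast_nonneg (hw.nonneg t)) hw.hasSum_mean) (by positivity)

lemma HasMeanEntropy.tendsto_overflow (hw : HasMeanEntropy w x h) :
    Tendsto (overflow w x) atTop (nhds 0) :=
  have hsum := hw.hasSum_mean.tendsto_sum_nat.comp (tendsto_add_atTop_nat 1)
  (hsum.const_sub x).div_atTop (tendsto_natCast_atTop_atTop.comp (tendsto_add_atTop_nat 1))

lemma HasMeanEntropy.tendsto_truncLaw_zero (hw : HasMeanEntropy w x h) :
    Tendsto (fun K => truncLaw w x K 0) atTop (nhds (w 0)) := by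
  have hsum := hw.hasSum_one.tendsto_sum_nat.comp (tendsto_add_atTop_nat 1)
  simpa [truncLaw] using ((hsum.const_sub 1).sub hw.tendsto_overflow).const_add (w 0)

lemma HasMeanEntropy.eventually_truncLaw_nonneg (hw : HasMeanEntropy w x h) (hw₀ : 0 < w 0) :
    ∀ᶠ K in atTop, ∀ t, 0 ≤ truncLaw w x K t := by
  filter_upwards [hw.tendsto_truncLaw_zero.eventually_const_lt hw₀] with K hK t
  rcases eq_or_ne t 0 with rfl | ht
  · exact hK.le
  · rw [truncLaw, if_neg ht]
    split_ifs
    exacts [hw.overflow_nonneg K, hw.nonneg t]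

lemma HasMeanEntropy.tendsto_entropy_truncLaw (hw : HasMeanEntropy w x h) :
    Tendsto (fun K => ∑ t : Fin (K + 1 + 1), negMulLog (truncLaw w x K t)) atTop (nhds h) := by
  have hbulk := hw.hasSum_entropy.tendsto_sum_nat.comp (tendsto_add_atTop_nat 1)
  have hzero := ((continuous_negMulLog.tendsto _).comp hw.tendsto_truncLaw_zero).sub_const
    (negMulLog (w 0))
  have htop := (continuous_negMulLog.tendsto _).comp hw.tendsto_overflow
  simpa [Function.comp_def, fun K => sum_truncLaw w x K fun _ => negMulLog] using
    (hbulk.add hzero).add htop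

end Truncation

section LawsOnTables

variable {m n : ℕ} {κ : ℕ∞} {R : Fin m → ℕ} {C : Fin n → ℕ} {Z : Fin m → Fin n → ℝ}

lemma IsCellLaw.of_mem_transportPolytope {K : ℕ} (hZ : Z ∈ transportPolytope κ R C)
    {w : Fin m → Fin n → Fin (K + 1) → ℝ} (hw : ∀ i j t, 0 ≤ w i j t)
    (hw₁ : ∀ i j, ∑ t, w i j t = 1) (hmean : ∀ i j, ∑ t : Fin (K + 1), (t : ℕ) * w i j t = Z i j) :
    IsCellLaw R C 1 w where
  nonneg := hw
  sum_eq := hw₁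
  sum_row i := by simp only [hmean, hZ.2.2.1, one_mul]
  sum_col j := by simp only [hmean, hZ.2.2.2, one_mul]

lemma exists_isCellLaw_lt_cellEntropy_natCast {κ : ℕ} (hZ : Z ∈ transportPolytope κ R C) {u : ℝ}
    (hu : u < ∑ i, ∑ j, Hmax κ (Z i j)) :
    ∃ w : Fin m → Fin n → Fin (κ + 1) → ℝ, IsCellLaw R C 1 w ∧ u < cellEntropy w := by
  have hlaw i j := hasMeanEntropy_truncGeom (hZ.1 i j) (hZ.2.1 i j)
  have hsum {i j a} {F : ℕ → ℝ → ℝ} (hF : ∀ t, F t 0 = 0)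
      (ha : HasSum (fun t => F t (truncGeom κ (Z i j) t)) a) :
      ∑ t : Fin (κ + 1), F t (truncGeom κ (Z i j) t) = a := by
    rw [Fin.sum_univ_eq_sum_range fun t => F t (truncGeom κ (Z i j) t)]
    refine (hasSum_sum_of_ne_finset_zero fun t ht => ?_).unique ha
    rw [truncGeom_eq_zero _ (by simpa using ht), hF]
  refine ⟨fun i j t => truncGeom κ (Z i j) t,
    .of_mem_transportPolytope hZ (fun i j t => (hlaw i j).nonneg t)
      (fun i j => hsum (F := fun _ y => y) (fun _ => rfl) (hlaw i j).hasSum_one)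
      (fun i j => hsum (F := fun t y => t * y) (by simp) (hlaw i j).hasSum_mean), hu.trans_eq ?_⟩
  exact sum_congr rfl fun i _ => sum_congr rfl fun j _ =>
    (hsum (F := fun _ => negMulLog) (by simp) (hlaw i j).hasSum_entropy).symm

lemma exists_isCellLaw_lt_cellEntropy_top (hZ : Z ∈ transportPolytope ⊤ R C) {u : ℝ}
    (hu : u < ∑ i, ∑ j, Hmax ⊤ (Z i j)) :
    ∃ (K : ℕ) (w : Fin m → Fin n → Fin (K + 1) → ℝ), IsCellLaw R C 1 w ∧ u < cellEntropy w := by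
  have hlaw i j := hasMeanEntropy_truncGeom (hZ.1 i j) (hZ.2.1 i j)
  have hentropy := tendsto_finsetSum univ fun i _ => tendsto_finsetSum univ fun j _ =>
    (hlaw i j).tendsto_entropy_truncLaw
  have hnonneg := eventually_all.2 fun i => eventually_all.2 fun j =>
    (hlaw i j).eventually_truncLaw_nonneg (truncGeom_top_zero_pos (hZ.1 i j))
  obtain ⟨K, hK, hK₀⟩ := ((hentropy.eventually_const_lt hu).and hnonneg).exists
  exact ⟨K + 1, fun i j t => truncLaw (truncGeom ⊤ (Z i j)) (Z i j) K t,
    .of_mem_transportPolytope hZ (fun i j t => hK₀ i j t) (fun i j => sum_truncLaw_eq_one _ _ K)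
      (fun i j => sum_mul_truncLaw _ _ K), hK⟩

lemma exists_isCellLaw_lt_cellEntropy (hZ : Z ∈ transportPolytope κ R C) {u : ℝ}
    (hu : u < ∑ i, ∑ j, Hmax κ (Z i j)) :
    ∃ K : ℕ, K ≤ κ ∧
      ∃ w : Fin m → Fin n → Fin (K + 1) → ℝ, IsCellLaw R C 1 w ∧ u < cellEntropy w := by
  induction κ using ENat.recTopCoe with
  | top => simpa using exists_isCellLaw_lt_cellEntropy_top hZ hu
  | coe k => exact ⟨k, le_rfl, exists_isCellLaw_lt_cellEntropy_natCast hZ hu⟩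

end LawsOnTables

section LowerBound

variable {m n K : ℕ} {κ : ℕ∞} {R : Fin m → ℕ} {C : Fin n → ℕ}

lemma card_pow_le_of_sum_block_eq {G : Type*} [AddCommGroup G] [Fintype G] (hK : K ≤ κ)
    {W : Finset (Fin m → Fin n → G × G → Fin (K + 1))} (hW : W.Nonempty) {M : Fin m → Fin n → ℕ}
    (hM : ∀ φ ∈ W, ∀ i j, ∑ g, (φ i j g : ℕ) = M i j)
    (hR : ∀ i, ∑ j, M i j = Fintype.card G * Fintype.card G * R i)
    (hC : ∀ j, ∑ i, M i j = Fintype.card G * Fintype.card G * C j) :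
    #W ^ (Fintype.card G * Fintype.card G) ≤
      ((Fintype.card G * (m + n) * K + 1) ^ (Fintype.card G * (m + n))) ^
          (Fintype.card G * Fintype.card G) *
        cloneCount κ R C (Fintype.card G * Fintype.card G) := by
  obtain ⟨assemble, hassemble⟩ : ∃ e : (Fin m → Fin n → G × G → Fin (K + 1)) ↪
      (G × Fin m → G × Fin n → ℕ), ∀ φ p i q j, e φ (p, i) (q, j) = φ i j (p, q) :=
    ⟨⟨fun φ x y => φ x.2 y.2 (x.1, y.1), fun φ ψ h => by
      ext i j g
      exact congrFun (congrFun h (g.1, i)) (g.2, j)⟩, fun _ _ _ _ _ => rfl⟩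
  have hle : ∀ A ∈ W.map assemble, ∀ x y, A x y ≤ K := by
    simp only [Finset.mem_map, forall_exists_index, and_imp]
    rintro _ φ - rfl ⟨p, i⟩ ⟨q, j⟩
    exact hassemble φ p i q j ▸ Nat.lt_succ_iff.1 (φ i j (p, q)).2
  obtain ⟨_, hA, hmax⟩ := exists_card_le_pow_mul_tableCount hK (hW.map (f := assemble)) hle
  obtain ⟨φ, hφ, rfl⟩ := Finset.mem_map.1 hA
  have hclone := tableCount_pow_le_cloneCount (κ := κ) (R := R) (C := C)
    (ρ := fun x => ∑ y, assemble φ x y) (γ := fun y => ∑ x, assemble φ x y)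
    (fun i => by
      simp only [Fintype.sum_prod_type, hassemble, ← hR i, ← hM φ hφ]
      exact (sum_congr rfl fun _ _ => sum_comm).trans sum_comm)
    (fun j => by
      simp only [Fintype.sum_prod_type, hassemble, ← hC j, ← hM φ hφ]
      exact sum_comm.trans ((sum_congr rfl fun _ _ => sum_comm).trans sum_comm))
  simp only [card_map, Fintype.card_prod, Fintype.card_fin, ← mul_add] at hmax
  calc #W ^ (Fintype.card G * Fintype.card G) ≤ _ := Nat.pow_le_pow_left hmax _
    _ = _ := mul_pow _ _ _
    _ ≤ _ := Nat.mul_le_mul_left _ hclone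

lemma IsCellLaw.prod_card_typeClass_pow_le {G : Type*} [AddCommGroup G] [Fintype G]
    [DecidableEq G] (hK : K ≤ κ) {k : Fin m → Fin n → Fin (K + 1) → ℕ}
    (hk : IsCellLaw R C (Fintype.card G * Fintype.card G) k) :
    (∏ i, ∏ j, #(typeClass (α := G × G) (k i j))) ^ (Fintype.card G * Fintype.card G) ≤
      ((Fintype.card G * (m + n) * K + 1) ^ (Fintype.card G * (m + n))) ^
          (Fintype.card G * Fintype.card G) *
        cloneCount κ R C (Fintype.card G * Fintype.card G) := by
  let W : Finset (Fin m → Fin n → G × G → Fin (K + 1)) :=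
    Fintype.piFinset fun i => Fintype.piFinset fun j => typeClass (k i j)
  have hcard : #W = ∏ i, ∏ j, #(typeClass (α := G × G) (k i j)) := by
    simp [W, Fintype.card_piFinset]
  have hW : W.Nonempty := by
    simp only [W, Fintype.piFinset_nonempty]
    exact fun i j => typeClass_nonempty (by simp [hk.sum_eq])
  have hblock : ∀ φ ∈ W, ∀ i j, ∑ g, (φ i j g : ℕ) = ∑ t : Fin (K + 1), (t : ℕ) * k i j t := by
    intro φ hφ i j
    simp only [W, Fintype.mem_piFinset] at hφ
    simpa [mul_comm] using sum_comp_of_mem_typeClass (hφ i j) Fin.val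
  rw [← hcard]
  exact card_pow_le_of_sum_block_eq hK hW hblock hk.sum_row hk.sum_col

/-- The error term of the type class estimate for tables assembled from `m * n` blocks of size
`a × a` with entries at most `K`: the first summand is what Stirling's bound loses on the `m * n`
type classes, the second one bounds the logarithm of the number of margins. -/
noncomputable def typeError (m n K a : ℕ) : ℝ :=
  m * n * (K + 1) * (log (a * a) + 1) + a * (m + n) * log (a * (m + n) * K + 1)

lemma tendsto_log_mul_add_one_div {b : ℝ} (hb : 0 ≤ b) :
    Tendsto (fun a : ℕ => log (a * b + 1) / a) atTop (nhds 0) := by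
  rcases hb.eq_or_lt with rfl | hb
  · simp
  have htop : Tendsto (fun a : ℕ => (a : ℝ) * b + 1) atTop atTop :=
    tendsto_atTop_add_const_right _ _ (tendsto_natCast_atTop_atTop.atTop_mul_const hb)
  refine ((tendsto_pow_log_div_mul_add_atTop b⁻¹ (-b⁻¹) 1 (by positivity)).comp htop).congr
    fun a => ?_
  simp only [Function.comp_apply, pow_one]
  congr 1
  field_simp
  ring

lemma tendsto_typeError_div_sq (m n K : ℕ) :
    Tendsto (fun a => typeError m n K a / (a * a)) atTop (nhds 0) := by
  have hsq : Tendsto (fun a : ℕ => (a : ℝ) * a) atTop atTop :=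
    tendsto_natCast_atTop_atTop.atTop_mul_atTop₀ tendsto_natCast_atTop_atTop
  have hletters : Tendsto (fun a : ℕ => log (a * a : ℝ) / (a * a)) atTop (nhds 0) := by
    simpa [Function.comp_def] using
      (tendsto_pow_log_div_mul_add_atTop 1 0 1 one_ne_zero).comp hsq
  have hmargins := tendsto_log_mul_add_one_div (b := (m + n) * K) (by positivity)
  have hsum := ((hletters.add (tendsto_inv_atTop_zero.comp hsq)).const_mul
    (m * n * (K + 1) : ℝ)).add (hmargins.const_mul (m + n : ℝ))
  simp only [add_zero, mul_zero] at hsum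
  refine hsum.congr' ?_
  filter_upwards [eventually_gt_atTop 0] with a ha
  simp only [Function.comp_apply, typeError]
  field_simp

lemma IsCellLaw.le_log_cloneCount (hK : K ≤ κ) {a : ℕ} (ha : 0 < a)
    {k : Fin m → Fin n → Fin (K + 1) → ℕ} (hk : IsCellLaw R C (a * a) k) :
    (a * a) * ((a * a) * cellEntropy (fun i j t => (k i j t : ℝ) / (a * a)) - typeError m n K a) ≤
      log (cloneCount κ R C (a * a)) := by
  have : NeZero a := ⟨ha.ne'⟩
  have hmass (i j) : ∑ t, k i j t = Fintype.card (Fin a × Fin a) := by simp [hk.sum_eq]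
  have hpos (i j) : 0 < #(typeClass (α := Fin a × Fin a) (k i j)) :=
    (typeClass_nonempty (hmass i j)).card_pos
  have hcell (i j) : a * a * ∑ t, negMulLog ((k i j t : ℝ) / (a * a)) -
      (K + 1) * (log (a * a) + 1) ≤ log #(typeClass (α := Fin a × Fin a) (k i j)) := by
    simpa using le_log_card_typeClass (hmass i j)
  have hcells := sum_le_sum fun i (_ : i ∈ univ) => sum_le_sum fun j (_ : j ∈ univ) => hcell i j
  have hglue : a * a * ∑ i, ∑ j, log #(typeClass (α := Fin a × Fin a) (k i j)) ≤
      a * a * (a * (m + n) * log (a * (m + n) * K + 1)) + log (cloneCount κ R C (a * a)) := by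
    have hle := IsCellLaw.prod_card_typeClass_pow_le (G := Fin a) hK (by simpa using hk)
    rw [Fintype.card_fin] at hle
    have hprod : 0 < ∏ i, ∏ j, #(typeClass (α := Fin a × Fin a) (k i j)) :=
      prod_pos fun i _ => prod_pos fun j _ => hpos i j
    have hclone : 0 < cloneCount κ R C (a * a) :=
      pos_of_mul_pos_right ((pow_pos hprod _).trans_le hle) (Nat.zero_le _)
    have hlog := log_le_log (by exact_mod_cast pow_pos hprod _) (Nat.cast_le (α := ℝ).2 hle)
    push_cast at hlog
    rw [log_mul (by positivity) (by positivity), log_pow, log_pow, log_pow,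
      log_prod fun i _ => prod_ne_zero_iff.2 fun j _ => by exact_mod_cast (hpos i j).ne'] at hlog
    push_cast at hlog
    convert hlog using 4 with i
    rw [log_prod fun j _ => by exact_mod_cast (hpos i j).ne']
  simp only [sum_sub_distrib, sum_const, card_univ, Fintype.card_fin, nsmul_eq_mul, ← mul_sum]
    at hcells
  rw [typeError, cellEntropy]
  nlinarith [mul_le_mul_of_nonneg_left hcells (by positivity : (0 : ℝ) ≤ a * a)]

lemma IsCellLaw.exists_lt_log_cloneCount_div_sq (hK : K ≤ κ) {w : Fin m → Fin n → Fin (K + 1) → ℚ}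
    (hw : IsCellLaw R C 1 w) {u : ℝ} (hu : u < cellEntropy fun i j t => (w i j t : ℝ)) :
    ∃ s : ℕ, 0 < s ∧ u < log (cloneCount κ R C s) / s ^ 2 := by
  obtain ⟨D, hD, k, hk, hkw⟩ := hw.exists_nat_isCellLaw
  have hmul : Tendsto (fun l => D * l) atTop atTop := tendsto_id.const_mul_atTop' hD
  have herror := (tendsto_typeError_div_sq m n K).comp hmul
  obtain ⟨l, herr, hl⟩ := ((herror.eventually_lt_const (sub_pos.2 hu)).and
    (eventually_gt_atTop 0)).exists
  have ha : 0 < D * l := by positivity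
  have hscale : IsCellLaw R C (D * l * (D * l)) fun i j t => D * l * l * k i j t := by
    have h := hk.const_mul (Nat.zero_le (D * l * l))
    rwa [show D * l * l * D = D * l * (D * l) by ring] at h
  have hlaw (i j t) : ((D * l * l * k i j t : ℕ) : ℝ) / ((D * l : ℕ) * (D * l : ℕ)) = w i j t := by
    have hcast : (k i j t : ℝ) = D * w i j t := by
      exact_mod_cast congrArg (Rat.cast (K := ℝ)) (hkw i j t)
    push_cast
    rw [hcast]
    field_simp
  have hlog := hscale.le_log_cloneCount hK ha
  simp only [hlaw] at hlog
  refine ⟨D * l * (D * l), by positivity, ?_⟩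
  rw [Function.comp_apply, div_lt_iff₀ (by positivity)] at herr
  rw [lt_div_iff₀ (by positivity)]
  have hmul_err := mul_lt_mul_of_pos_left herr
    (by positivity : (0 : ℝ) < (D * l : ℕ) * (D * l : ℕ))
  push_cast at hmul_err hlog ⊢
  linarith

end LowerBound

lemma exists_lt_log_cloneCount_div_sq {m n : ℕ} {κ : ℕ∞} {R : Fin m → ℕ} {C : Fin n → ℕ}
    {Z : Fin m → Fin n → ℝ} (hZ : Z ∈ transportPolytope κ R C) {u : ℝ}
    (hu : u < ∑ i, ∑ j, Hmax κ (Z i j)) :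
    ∃ s : ℕ, 0 < s ∧ u < log (cloneCount κ R C s) / s ^ 2 := by
  obtain ⟨K, hK, w, hw, hwu⟩ := exists_isCellLaw_lt_cellEntropy hZ hu
  obtain ⟨v, hv, hvu⟩ := hw.exists_rat_lt_cellEntropy hwu
  exact hv.exists_lt_log_cloneCount_div_sq hK hvu

/-- **Theorem 3(i).** The log-asymptotics of `T_κ(R^{(s)},C^{(s)})` equals the maximum of
`∑_{ij} H^max_κ(z_{ij})` over the polytope `Π_κ(R,C)`. -/
theorem tables_cloning_entropy_limit {m n : ℕ} (κ : ℕ∞) (hκ : 1 ≤ κ)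
    (R : Fin m → ℕ) (C : Fin n → ℕ) (N : ℕ)
    (hRN : ∑ i, R i = N) (hCN : ∑ j, C j = N)
    (hT : 0 < tableCount (fun (_ : Fin m) (_ : Fin n) => κ) R C) :
    Filter.Tendsto (fun s : ℕ => (1 / (s : ℝ) ^ 2) *
      Real.log (tableCount (fun (_ : Fin s × Fin m) (_ : Fin s × Fin n) => κ)
        (cloneVec s R) (cloneVec s C)))
      Filter.atTop
      (nhds (sSup {v : ℝ | ∃ Z ∈ transportPolytope κ R C,
        v = ∑ i, ∑ j, Hmax κ (Z i j)})) := by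
  have hbdd := bddAbove_sum_Hmax κ R C
  have hpos := cloneCount_pos hT
  have hmono : Monotone fun s => log (cloneCount κ R C s) := fun s t hst =>
    log_le_log (by exact_mod_cast hpos s) (by exact_mod_cast monotone_cloneCount hT hst)
  have hmul (q t : ℕ) :
      (q : ℝ) ^ 2 * log (cloneCount κ R C t) ≤ log (cloneCount κ R C (q * t)) := by
    have hle := log_le_log (by exact_mod_cast pow_pos (hpos t) (q * q))
      (Nat.cast_le (α := ℝ).2 (cloneCount_pow_le κ R C q t))
    rwa [Nat.cast_pow, log_pow, Nat.cast_mul, ← sq] at hle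
  refine (tendsto_div_sq hmono hmul (fun s hs => ?_) fun u hu => ?_).congr fun s => ?_
  · obtain ⟨Z, hZ, hle⟩ := exists_log_cloneCount_le hs (hpos s)
    exact hle.trans (mul_le_mul_of_nonneg_left (le_csSup hbdd ⟨Z, hZ, rfl⟩) (by positivity))
  · obtain ⟨Z, hZ⟩ := transportPolytope_nonempty hT
    obtain ⟨_, ⟨Z, hZ, rfl⟩, hu⟩ := (lt_csSup_iff hbdd ⟨_, Z, hZ, rfl⟩).1 hu
    exact exists_lt_log_cloneCount_div_sq hZ hu
  · rw [one_div_mul_eq_div, cloneCount]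
end
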